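/- arXiv:1502.00359 — 5 statements merged into one kernel-verified Lean document; each statement's English description precedes it below -/
import Mathlib

section
/- If q is a power of an odd prime and k = q² − q + 1, then c_k > 1/(2√(k−1) + 1) and c_{−k+1} > 1/(2√(k−1) + 1). -/
/-!
Let `F` be the field with `q²` elements, `φ x = x ^ q` its involution and `χ` its quadratic
character. On the `N = q³ + 1` isotropic points of the Hermitian form `herm φ` on `F³` (the
Hermitian unital), represented by normalised vectors, the matrix `χ (herm φ x y)` is symmetric,
because `χ ∘ φ = χ`, has zero diagonal and entries `±1` off it, because distinct isotropic points
are not orthogonal. This is a Seidel matrix of Taylor's unitary two-graph. Up to a global sign its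
square is `q³ + (q² - q) S` (`exists_conference_like`), so its eigenvalues are `q²` and `-q`, and
since its trace vanishes `q²` has multiplicity `q² - q + 1 = k` (`exists_seidel`).

To compute the square, the sum of `χ (herm φ x z) * χ (herm φ z y)` over isotropic vectors `z` is
evaluated in a basis adapted to `x` and `y` (`vector_sum`). There it reduces to sums of `χ` over
the fibres of the trace `b ↦ b + φ b`, which are constant away from the zero fibre because every
element fixed by `φ` is a square in `F` (`fiber_sum`).

For `c_{-(k-1)}`, the graph with adjacency matrix `(J - I - S) / 2` acts as `-(q² + 1) / 2` on the
sum-zero part of the `q²`-eigenspace of `S`, which has dimension at least `k - 1`. For `c_k`, in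
the graph with adjacency matrix `(J + I + S) / 2`, loops included, every vertex is blown up to a
clique on `t` vertices; as `J` is positive semidefinite, its `k`-th eigenvalue is at least
`t (q² + 1) / 2 - 1`. Both ratios reach, for large `t`, values above the required bound, because
`(q² + 1) / (2 (q³ + 1)) > 1 / (2 √(q² - q) + 1)` for `q ≥ 3` (`ratio_gt`). The passage from
quadratic forms on subspaces to sorted eigenvalues is the Courant–Fischer argument of
`le_eigAsc` and `eigAsc_le`.
-/

open Matrix BigOperators

/-- The eigenvalues (with multiplicity) of a real symmetric matrix, listed in
nondecreasing order (the empty list if the matrix is not Hermitian). -/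
noncomputable def eigAsc {n : ℕ} (A : Matrix (Fin n) (Fin n) ℝ) : List ℝ := by
  classical
  exact if hA : A.IsHermitian then
    (Finset.univ.val.map hA.eigenvalues).sort (· ≤ ·)
  else []

/-- `eigval A k` is the `k`-th largest eigenvalue of `A` (1-indexed). -/
noncomputable def eigval {n : ℕ} (A : Matrix (Fin n) (Fin n) ℝ) (k : ℕ) : ℝ :=
  (eigAsc A).getD (n - k) 0

/-- The singular values (absolute values of eigenvalues, with multiplicity) of a
real symmetric matrix, listed in nondecreasing order. -/
noncomputable def singAsc {n : ℕ} (A : Matrix (Fin n) (Fin n) ℝ) : List ℝ := by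
  classical
  exact if hA : A.IsHermitian then
    (Finset.univ.val.map (fun i => |hA.eigenvalues i|)).sort (· ≤ ·)
  else []

/-- `singval A k` is the `k`-th largest singular value of `A` (1-indexed). -/
noncomputable def singval {n : ℕ} (A : Matrix (Fin n) (Fin n) ℝ) (k : ℕ) : ℝ :=
  (singAsc A).getD (n - k) 0

/-- `graphEig G k` is the `k`-th largest adjacency eigenvalue of `G` (1-indexed). -/
noncomputable def graphEig {n : ℕ} (G : SimpleGraph (Fin n)) (k : ℕ) : ℝ := by
  classical
  exact eigval (G.adjMatrix ℝ) k

/-- `graphSing G k` is the `k`-th largest singular value of `G` (1-indexed). -/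
noncomputable def graphSing {n : ℕ} (G : SimpleGraph (Fin n)) (k : ℕ) : ℝ := by
  classical
  exact singval (G.adjMatrix ℝ) k

/-- `cPos k` is the supremum of `λ_k(G)/n` over all graphs `G` of order `n ≥ k`. -/
noncomputable def cPos (k : ℕ) : ℝ :=
  sSup { x : ℝ | ∃ n : ℕ, k ≤ n ∧ ∃ G : SimpleGraph (Fin n), x = graphEig G k / n }

/-- `cNeg k` is the supremum of `|λ_{n-k+1}(G)|/n` over all graphs `G` of order `n ≥ k`. -/
noncomputable def cNeg (k : ℕ) : ℝ :=
  sSup { x : ℝ | ∃ n : ℕ, k ≤ n ∧ ∃ G : SimpleGraph (Fin n), x = |graphEig G (n - k + 1)| / n }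

/-! ### Character sums over the fibres of the trace -/

section Field
variable {F : Type*} [Field F] [Fintype F] [DecidableEq F] {q : ℕ} {φ : F →+* F}

theorem card_roots_le (hq : 2 ≤ q) (c τ : F) :
    (Finset.univ.filter fun x : F => x ^ q + c * x = τ).card ≤ q := by
  classical
  open Polynomial in
  set P : F[X] := X ^ q + (C c * X - C τ) with hP
  have hd : (C c * X - C τ : F[X]).degree < q := by
    refine lt_of_le_of_lt (?_ : _ ≤ (1 : WithBot ℕ)) (by exact_mod_cast hq)
    compute_degree
  have hm : P.Monic := Polynomial.monic_X_pow_add hd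
  have hn : P.natDegree = q := by
    have : P.degree = q := by
      rw [hP, Polynomial.degree_add_eq_left_of_degree_lt (by rwa [Polynomial.degree_X_pow]),
        Polynomial.degree_X_pow]
    exact Polynomial.natDegree_eq_of_degree_eq_some this
  calc _ ≤ P.roots.toFinset.card := by
        apply Finset.card_le_card
        intro x hx
        simp only [Finset.mem_filter, Finset.mem_univ, true_and] at hx
        rw [Multiset.mem_toFinset, Polynomial.mem_roots hm.ne_zero]
        simp [hP, Polynomial.IsRoot, ← hx]
    _ ≤ P.roots.card := Multiset.toFinset_card_le _
    _ ≤ q := hn ▸ Polynomial.card_roots' P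

omit [DecidableEq F] in
theorem two_le_q (hF : Fintype.card F = q ^ 2) : 2 ≤ q := by
  have := Fintype.one_lt_card (α := F)
  rw [hF] at this
  by_contra h
  interval_cases q <;> simp at this

omit [DecidableEq F] in
theorem conj_conj (hφ : ∀ x, φ x = x ^ q) (hF : Fintype.card F = q ^ 2) (x : F) :
    φ (φ x) = x := by
  rw [hφ, hφ, ← pow_mul, ← sq, ← hF, FiniteField.pow_card]

/-- The fixed field of `φ` has `q` elements, and so has every fibre of the trace over it: all these
cardinalities are at most `q` by degree, while the fibres partition a set of size `q²`. -/
theorem card_fixed_and_fiber (hφ : ∀ x, φ x = x ^ q) (hF : Fintype.card F = q ^ 2) :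
    (Finset.univ.filter fun x : F => φ x = x).card = q ∧
    ∀ τ, φ τ = τ → (Finset.univ.filter fun x : F => x + φ x = τ).card = q := by
  have hq := two_le_q hF
  have hK : (Finset.univ.filter fun x : F => φ x = x).card ≤ q := by
    have := card_roots_le hq (-1 : F) 0
    refine le_trans (le_of_eq ?_) this
    congr 1; ext x; simp [hφ, ← sub_eq_add_neg, sub_eq_zero]
  have hT : ∀ τ : F, (Finset.univ.filter fun x : F => x + φ x = τ).card ≤ q := by
    intro τ
    have := card_roots_le hq (1 : F) τ
    refine le_trans (le_of_eq ?_) this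
    congr 1; ext x; simp [hφ, add_comm]
  have hsum : q ^ 2 = ∑ τ ∈ Finset.univ.filter (fun x : F => φ x = x),
      (Finset.univ.filter fun x : F => x + φ x = τ).card := by
    rw [← hF, ← Finset.card_univ]
    apply Finset.card_eq_sum_card_fiberwise
    intro x _
    simp [conj_conj hφ hF, add_comm]
  have h1 : ∑ τ ∈ Finset.univ.filter (fun x : F => φ x = x),
      (Finset.univ.filter fun x : F => x + φ x = τ).card ≤
      (Finset.univ.filter fun x : F => φ x = x).card * q := by
    rw [← smul_eq_mul]
    exact Finset.sum_le_card_nsmul _ _ _ (fun τ _ => hT τ)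
  -- `q ^ 2 ≤ #K * q` forces equality in `#K ≤ q`, and then in each fibre
  have hK' : (Finset.univ.filter fun x : F => φ x = x).card = q := by nlinarith
  refine ⟨hK', fun τ hτ => ?_⟩
  by_contra hne
  have : ∑ τ ∈ Finset.univ.filter (fun x : F => φ x = x),
      (Finset.univ.filter fun x : F => x + φ x = τ).card <
      ∑ τ ∈ Finset.univ.filter (fun x : F => φ x = x), q :=
    Finset.sum_lt_sum (fun τ _ => hT τ) ⟨τ, by simpa using hτ, lt_of_le_of_ne (hT τ) hne⟩
  rw [← hsum, Finset.sum_const, hK', smul_eq_mul] at this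
  nlinarith

/-- If `x ^ (q - 1) = 1` then `x` is a square, since `q - 1` divides `(q² - 1) / 2`. -/
theorem char_fixed (hφ : ∀ x, φ x = x ^ q) (hF : Fintype.card F = q ^ 2) (hq : Odd q)
    {x : F} (hx : φ x = x) (h0 : x ≠ 0) : quadraticChar F x = 1 := by
  have h2 : ringChar F ≠ 2 := by
    intro h
    have := FiniteField.even_card_of_char_two h
    rw [hF] at this
    have := hq.pow (n := 2)
    rw [Nat.odd_iff] at this
    omega
  rw [quadraticChar_eq_pow_of_char_ne_two h2 h0, if_pos]
  obtain ⟨r, rfl⟩ := hq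
  have h1 : x ^ (2 * r) = 1 := by
    rw [hφ, pow_succ] at hx
    exact mul_right_cancel₀ h0 (by rw [hx, one_mul])
  have : Fintype.card F / 2 = 2 * r * (r + 1) := by rw [hF]; ring_nf; omega
  rw [this, pow_mul, h1, one_pow]

theorem char_conj (hφ : ∀ x, φ x = x ^ q) (hq : Odd q) (x : F) :
    quadraticChar F (φ x) = quadraticChar F x := by
  rw [hφ, map_pow]
  by_cases h : x = 0
  · subst h; simp [hq.pos.ne']
  · obtain ⟨r, rfl⟩ := hq
    rw [pow_succ, pow_mul, quadraticChar_sq_one h]; simp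

/-- The sum of the quadratic character over a fibre of the trace. On the zero fibre the character
is constant, equal to some `η`, away from `0`; the other fibres are permuted by multiplication by
fixed elements, so their sums agree, and they are found from the vanishing of the total sum. -/
theorem fiber_sum (hφ : ∀ x, φ x = x ^ q) (hF : Fintype.card F = q ^ 2) (hq : Odd q) :
    ∃ η : ℤ, (η = 1 ∨ η = -1) ∧
      (∑ b : F, if b + φ b = 0 then quadraticChar F b else 0) = η * (q - 1) ∧
      ∀ τ : F, φ τ = τ → τ ≠ 0 →
        (∑ b : F, if b + φ b = τ then quadraticChar F b else 0) = -η := by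
  obtain ⟨hK, hT⟩ := card_fixed_and_fiber hφ hF
  have h2 := two_le_q hF
  have h0 := hT 0 (map_zero φ)
  obtain ⟨ε, hε, hε0⟩ : ∃ ε : F, ε + φ ε = 0 ∧ ε ≠ 0 := by
    by_contra! h
    have : (Finset.univ.filter fun x : F => x + φ x = 0).card ≤ ({0} : Finset F).card := by
      apply Finset.card_le_card
      intro x hx
      simpa using h x (by simpa using hx)
    simp at this
    omega
  -- the quotient of two elements of trace zero is fixed by `φ`
  have hchar : ∀ b : F, b + φ b = 0 → b ≠ 0 → quadraticChar F b = quadraticChar F ε := by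
    intro b hb hb0
    have : quadraticChar F (b / ε) = 1 := by
      refine char_fixed hφ hF hq ?_ (div_ne_zero hb0 hε0)
      rw [map_div₀, eq_neg_of_add_eq_zero_right hb, eq_neg_of_add_eq_zero_right hε, neg_div_neg_eq]
    calc _ = quadraticChar F (b / ε * ε) := by rw [div_mul_cancel₀ _ hε0]
      _ = _ := by rw [map_mul, this, one_mul]
  have hg0 : (∑ b : F, if b + φ b = 0 then quadraticChar F b else 0)
      = quadraticChar F ε * (q - 1) := by
    rw [← Finset.sum_filter, ← Finset.sum_erase (a := (0 : F)) _ (by simp)]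
    rw [Finset.sum_congr rfl (g := fun _ => quadraticChar F ε)]
    · rw [Finset.sum_const, Finset.card_erase_of_mem (by simp), h0, nsmul_eq_mul,
        Nat.cast_sub (by omega)]
      push_cast; ring
    · intro b hb
      simp at hb
      exact hchar b hb.2 hb.1
  have hscale : ∀ τ : F, φ τ = τ → τ ≠ 0 →
        (∑ b : F, if b + φ b = τ then quadraticChar F b else 0) =
        ∑ b : F, if b + φ b = 1 then quadraticChar F b else 0 := by
    intro τ hτ hτ0
    symm
    refine Fintype.sum_equiv (Equiv.mulLeft₀ τ hτ0) _ _ fun b => ?_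
    simp only [Equiv.mulLeft₀_apply, map_mul, hτ, char_fixed hφ hF hq hτ hτ0, one_mul, ← mul_add]
    congr 1
    simp [hτ0]
  have hr : ringChar F ≠ 2 := by
    intro h
    have := FiniteField.even_card_of_char_two h
    rw [hF] at this
    have := hq.pow (n := 2)
    rw [Nat.odd_iff] at this
    omega
  have htot : ∑ τ ∈ Finset.univ.filter (fun x : F => φ x = x),
      (∑ b : F, if b + φ b = τ then quadraticChar F b else 0) = 0 := by
    rw [Finset.sum_comm]
    refine Eq.trans ?_ (quadraticChar_sum_zero hr)
    refine Finset.sum_congr rfl fun b _ => ?_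
    rw [Finset.sum_ite_eq, if_pos]
    simp [conj_conj hφ hF, add_comm]
  rw [← Finset.add_sum_erase _ _ (a := (0 : F)) (by simp), hg0,
    Finset.sum_congr rfl (g := fun _ => ∑ b : F, if b + φ b = 1 then quadraticChar F b else 0),
    Finset.sum_const, Finset.card_erase_of_mem (by simp), hK, nsmul_eq_mul,
        Nat.cast_sub (by omega)] at htot
  · refine ⟨quadraticChar F ε, quadraticChar_dichotomy hε0, hg0, fun τ hτ hτ0 => ?_⟩
    rw [hscale τ hτ hτ0]
    have : ((q : ℤ) - 1) ≠ 0 := by omega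
    apply mul_left_cancel₀ this
    push_cast at htot
    linarith
  · intro τ h
    simp at h
    exact hscale τ h.2 h.1

end Field

/-! ### Isotropic points of the Hermitian plane -/

section Herm
variable {F : Type*} [Field F] [Fintype F] [DecidableEq F] {q : ℕ} {φ : F →+* F}

/-- The Hermitian form `u₁ v̄₃ + u₂ v̄₂ + u₃ v̄₁` on `F³`, with `v̄ = φ v`. -/
def herm (φ : F →+* F) (u v : F × F × F) : F :=
  u.1 * φ v.2.2 + u.2.1 * φ v.2.1 + u.2.2 * φ v.1

omit [Fintype F] [DecidableEq F] in
theorem conj_herm (hc : ∀ x, φ (φ x) = x) (u v : F × F × F) :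
    φ (herm φ u v) = herm φ v u := by
  simp only [herm, map_add, map_mul, hc]; ring

/-- The vector `α x + β y + γ w` for `c = (β, γ, α)`; this order lets sums over `c` be taken
over `β` first. -/
def comb (x y w : F × F × F) (c : F × F × F) : F × F × F :=
  c.2.2 • x + c.1 • y + c.2.1 • w

omit [DecidableEq F] in
/-- Two isotropic vectors with nonzero product are completed to a basis by their conjugate cross
product `w`, which is orthogonal to both and anisotropic, with `δ = herm φ w w`. -/
theorem exists_third (hc : ∀ x, φ (φ x) = x) {x y : F × F × F} (hx : herm φ x x = 0)
    (hy : herm φ y y = 0) (h : herm φ x y ≠ 0) :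
    ∃ w δ, φ δ = δ ∧ δ ≠ 0 ∧ (∀ c, herm φ x (comb x y w c) = φ c.1 * herm φ x y) ∧
      (∀ c, herm φ (comb x y w c) y = c.2.2 * herm φ x y) ∧
      (∀ c, herm φ (comb x y w c) (comb x y w c) =
        (c.2.2 * φ c.1 * herm φ x y + φ (c.2.2 * φ c.1 * herm φ x y)) +
          c.2.1 * φ c.2.1 * δ) ∧
      Function.Bijective (comb x y w) := by
  obtain ⟨x1, x2, x3⟩ := x
  obtain ⟨y1, y2, y3⟩ := y
  set w : F × F × F := (φ (x1 * y2 - x2 * y1), φ (x3 * y1 - x1 * y3), φ (x2 * y3 - x3 * y2)) with hw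
  set x : F × F × F := (x1, x2, x3) with hxd
  set y : F × F × F := (y1, y2, y3) with hyd
  have hxw : herm φ x w = 0 := by
    simp only [herm, hw, hxd, map_sub, map_mul, hc]; ring
  have hyw : herm φ y w = 0 := by
    simp only [herm, hw, hyd, map_sub, map_mul, hc]; ring
  have hwx : herm φ w x = 0 := by rw [← conj_herm hc, hxw, map_zero]
  have hwy : herm φ w y = 0 := by rw [← conj_herm hc, hyw, map_zero]
  have hww : herm φ w w = herm φ x y * herm φ y x - herm φ x x * herm φ y y := by
    simp only [herm, hw, hxd, hyd, map_sub, map_mul, hc]; ring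
  have hyx : herm φ y x ≠ 0 := by
    rw [← conj_herm hc]; exact (map_ne_zero φ).2 h
  have hδ : herm φ w w ≠ 0 := by
    rw [hww, hx, zero_mul, sub_zero]; exact mul_ne_zero h hyx
  have hl : ∀ c v, herm φ (comb x y w c) v =
      c.2.2 * herm φ x v + c.1 * herm φ y v + c.2.1 * herm φ w v := by
    intro c v
    simp only [herm, comb, Prod.fst_add, Prod.snd_add, Prod.smul_fst, Prod.smul_snd, smul_eq_mul]
    ring
  have hr : ∀ c v, herm φ v (comb x y w c) =
      φ c.2.2 * herm φ v x + φ c.1 * herm φ v y + φ c.2.1 * herm φ v w := by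
    intro c v
    simp only [herm, comb, Prod.fst_add, Prod.snd_add, Prod.smul_fst, Prod.smul_snd, smul_eq_mul,
      map_add, map_mul]
    ring
  refine ⟨w, herm φ w w, conj_herm hc _ _, hδ, ?_, ?_, ?_, ?_⟩
  · intro c; rw [hr, hx, hxw]; ring
  · intro c; rw [hl, hy, hwy]; ring
  · intro c
    rw [hl, hr, hr, hr, hx, hy, hxw, hyw, hwx, hwy, map_mul, map_mul, hc, conj_herm hc]; ring
  · rw [Finite.injective_iff_bijective.symm]
    intro c d hcd
    have e1 := congrArg (fun v => herm φ v x) hcd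
    have e2 := congrArg (fun v => herm φ v y) hcd
    have e3 := congrArg (fun v => herm φ v w) hcd
    simp only [hl, hx, hy, hxw, hyw, hwx, hwy, mul_zero, add_zero, zero_add] at e1 e2 e3
    exact Prod.ext (mul_right_cancel₀ hyx e1) (Prod.ext (mul_right_cancel₀ hδ e3)
      (mul_right_cancel₀ h e2))

/-- The sum of `χ (herm φ x z) * χ (herm φ z y)` over isotropic vectors `z = α x + β y + γ w`.
For fixed `β ≠ 0` and `γ`, it is a sum of `χ` over the trace fibre of `-γ γ̄ δ` after the
substitution `u = α β̄ herm φ x y`; the terms with `β = 0` vanish. -/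
theorem vector_sum (hφ : ∀ x, φ x = x ^ q) (hF : Fintype.card F = q ^ 2) (hq : Odd q)
    {η : ℤ}
    (hη0 : (∑ b : F, if b + φ b = 0 then quadraticChar F b else 0) = η * (q - 1))
    (hη : ∀ τ : F, φ τ = τ → τ ≠ 0 →
        (∑ b : F, if b + φ b = τ then quadraticChar F b else 0) = -η)
    {x y : F × F × F} (hx : herm φ x x = 0)
    (hy : herm φ y y = 0) (h : herm φ x y ≠ 0) :
    (∑ z : F × F × F, if herm φ z z = 0 then
      quadraticChar F (herm φ x z) * quadraticChar F (herm φ z y) else 0) =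
    (q ^ 2 - 1) * (-η * (q ^ 2 - q)) * quadraticChar F (herm φ x y) := by
  have hc := conj_conj hφ hF
  obtain ⟨w, δ, hδ, hδ0, h1, h2, h3, hb⟩ := exists_third hc hx hy h
  rw [← hb.sum_comp]
  simp only [h1, h2, h3]
  generalize herm φ x y = H at *
  rw [Fintype.sum_prod_type]
  have key : ∀ β : F, β ≠ 0 → (∑ c : F × F,
      if c.2 * φ β * H + φ (c.2 * φ β * H) + c.1 * φ c.1 * δ = 0 then
        quadraticChar F (φ β * H) * quadraticChar F (c.2 * H) else 0) =
      -η * (q ^ 2 - q) * quadraticChar F H := by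
    intro β hβ
    have hm : φ β * H ≠ 0 := mul_ne_zero ((map_ne_zero φ).2 hβ) h
    rw [Fintype.sum_prod_type]
    have inner : ∀ γ : F, (∑ α : F,
      if α * φ β * H + φ (α * φ β * H) + γ * φ γ * δ = 0 then
        quadraticChar F (φ β * H) * quadraticChar F (α * H) else 0) =
        (if γ = 0 then η * (q - 1) else -η) * quadraticChar F H := by
      intro γ
      have : ∀ τ : F, τ = - (γ * φ γ * δ) → (∑ b : F, if b + φ b = τ then quadraticChar F b else 0)
          = if γ = 0 then η * (q - 1) else -η := by
        intro τ hτ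
        split_ifs with h0
        · rw [← hη0, hτ, h0]; simp
        · apply hη
          · rw [hτ, map_neg, map_mul, map_mul, hδ, hc, mul_comm γ]
          · rw [hτ]
            exact neg_ne_zero.2 (mul_ne_zero (mul_ne_zero h0 ((map_ne_zero φ).2 h0)) hδ0)
      rw [← this _ rfl, Finset.sum_mul]
      refine Fintype.sum_equiv (Equiv.mulRight₀ (φ β * H) hm) _ _ fun α => ?_
      simp only [Equiv.mulRight₀_apply, ← mul_assoc, ite_mul, zero_mul, eq_neg_iff_add_eq_zero]
      congr 1
      simp only [map_mul]; ring
    simp only [inner]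
    rw [← Finset.sum_mul, ← Finset.add_sum_erase _ _ (Finset.mem_univ (0 : F)),
      Finset.sum_congr rfl (g := fun _ => -η)]
    · rw [if_pos rfl, Finset.sum_const, Finset.card_erase_of_mem (Finset.mem_univ _),
        Finset.card_univ, hF, nsmul_eq_mul, Nat.cast_sub (Nat.one_le_pow _ _ hq.pos)]
      push_cast; ring
    · intro a ha
      rw [if_neg (Finset.ne_of_mem_erase ha)]
  rw [← Finset.add_sum_erase _ _ (Finset.mem_univ (0 : F)), Finset.sum_congr rfl
    (fun β hβ => key β (Finset.ne_of_mem_erase hβ))]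
  rw [Finset.sum_const, Finset.card_erase_of_mem (Finset.mem_univ _),
        Finset.card_univ, hF, nsmul_eq_mul, Nat.cast_sub (Nat.one_le_pow _ _ hq.pos)]
  simp
  ring

/-- The isotropic points of the Hermitian plane, each represented by its normalised vector:
`(1, a, b)`, or `(0, 0, 1)` for the only isotropic point with first coordinate zero. -/
abbrev UPoint (φ : F →+* F) : Type _ :=
  {z : F × F × F // herm φ z z = 0 ∧ (z.1 = 1 ∨ z = (0, 0, 1))}

/-- There are `q³ + 1` isotropic points: `(0, 0, 1)`, and for each of the `q²` values of `a` the
`q` solutions `b` of `b + b̄ = -a ā`. -/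
theorem card_UPoint (hφ : ∀ x, φ x = x ^ q) (hF : Fintype.card F = q ^ 2) :
    Fintype.card (UPoint φ) = q ^ 3 + 1 := by
  have hq := two_le_q hF
  have hc := conj_conj hφ hF
  rw [Fintype.card_subtype]
  have : (Finset.univ.filter fun z : F × F × F => herm φ z z = 0 ∧ (z.1 = 1 ∨ z = (0, 0, 1))) =
    insert (0, 0, 1) ((Finset.univ.filter fun p : F × F =>
      p.2 + φ p.2 = - (p.1 * φ p.1)).image (Prod.mk 1)) := by
    ext ⟨z1, z2, z3⟩
    simp only [Finset.mem_filter, Finset.mem_univ, true_and, Finset.mem_insert, Finset.mem_image,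
      Prod.mk.injEq, Prod.exists]
    constructor
    · rintro ⟨h, rfl | h'⟩
      · right
        refine ⟨z2, z3, ?_, rfl, rfl, rfl⟩
        simp [herm] at h
        linear_combination h
      · exact Or.inl h'
    · rintro (⟨rfl, rfl, rfl⟩ | ⟨a, b, h, rfl, rfl, rfl⟩)
      · simp [herm]
      · simp [herm]
        linear_combination h
  rw [this, Finset.card_insert_of_notMem (by simp [Prod.ext_iff]),
    Finset.card_image_of_injective _ (Prod.mk_right_injective 1), Finset.card_filter,
    Fintype.sum_prod_type]
  simp only [← Finset.card_filter]
  rw [Finset.sum_congr rfl (g := fun _ => q)]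
  · simp [hF]; ring
  · intro a _
    apply (card_fixed_and_fiber hφ hF).2
    rw [map_neg, map_mul, hc, mul_comm]

omit [DecidableEq F] in
/-- Distinct isotropic points are not orthogonal. -/
theorem herm_ne_zero (hφ : ∀ x, φ x = x ^ q) (hF : Fintype.card F = q ^ 2)
    {x y : UPoint φ} (hxy : x ≠ y) : herm φ x.1 y.1 ≠ 0 := by
  have hc := conj_conj hφ hF
  obtain ⟨⟨x1, x2, x3⟩, hx, h1⟩ := x
  obtain ⟨⟨y1, y2, y3⟩, hy, h2⟩ := y
  contrapose! hxy
  have hyx : herm φ (y1, y2, y3) (x1, x2, x3) = 0 := by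
    rw [← conj_herm hc, hxy, map_zero]
  simp only [Subtype.mk.injEq, Prod.mk.injEq] at *
  simp only [herm] at hx hy hxy hyx
  rcases h1 with rfl | ⟨rfl, rfl, rfl⟩ <;> rcases h2 with rfl | ⟨rfl, rfl, rfl⟩
  · simp at *
    have h0 : (x2 - y2) * φ (x2 - y2) = 0 := by
      rw [map_sub]; linear_combination hx + hy - hxy - hyx
    have h2 : x2 = y2 := by
      rcases mul_eq_zero.1 h0 with h | h
      · exact sub_eq_zero.1 h
      · exact sub_eq_zero.1 ((map_eq_zero φ).1 h)
    refine ⟨h2, ?_⟩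
    subst h2
    linear_combination hxy - hy
  · simp at hxy
  · simp at hxy
  · simp

/-- A scaling-invariant function summed over isotropic vectors: each point accounts for its
`|F| - 1` nonzero multiples. -/
theorem sum_isotropic (f : F × F × F → ℤ) (h0 : f 0 = 0)
    (hf : ∀ (u : F) z, u ≠ 0 → f (u • z) = f z) :
    (∑ z : F × F × F, if herm φ z z = 0 then f z else 0) =
      (Fintype.card F - 1) * ∑ z : UPoint φ, f z.1 := by
  have : ((Fintype.card F : ℤ) - 1) * ∑ z : UPoint φ, f z.1 =
      ∑ p : Fˣ × UPoint φ, f ((p.1 : F) • p.2.1) := by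
    rw [Fintype.sum_prod_type]
    simp only [hf _ _ (Units.ne_zero _)]
    rw [Finset.sum_const, Finset.card_univ, Fintype.card_units, nsmul_eq_mul,
      Nat.cast_sub Fintype.card_pos, Nat.cast_one]
  have hs : ∀ (u : F) (z : F × F × F), herm φ (u • z) (u • z) = u * φ u * herm φ z z := by
    intro u z; simp [herm]; ring
  rw [this, ← Finset.sum_filter]
  symm
  rw [← Finset.sum_erase (a := (0 : F × F × F)) _ h0]
  refine Finset.sum_bij (fun p _ => (p.1 : F) • p.2.1) ?_ ?_ ?_ (fun _ _ => rfl)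
  · rintro ⟨u, z, hz, hz'⟩ -
    simp only [Finset.mem_erase, Finset.mem_filter, Finset.mem_univ, hs, hz, mul_zero,
      and_true]
    refine smul_ne_zero u.ne_zero ?_
    rintro rfl
    simp [Prod.ext_iff] at hz'
  · rintro ⟨u, ⟨z1, z2, z3⟩, hz, hz'⟩ - ⟨v, ⟨t1, t2, t3⟩, ht, ht'⟩ - h
    simp only [Prod.smul_mk, smul_eq_mul, Prod.mk.injEq] at h
    have huv : u = v ∧ z1 = t1 := by
      clear hf this hs hz ht
      simp only [Prod.mk.injEq] at hz' ht'
      rcases hz' with rfl | ⟨rfl, rfl, rfl⟩ <;> rcases ht' with rfl | ⟨rfl, rfl, rfl⟩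
      · exact ⟨Units.ext (by simpa using h.1), rfl⟩
      · simp at h
      · exact absurd h.1.symm (by simp)
      · exact ⟨Units.ext (by simpa using h.2.2), rfl⟩
    obtain ⟨rfl, rfl⟩ := huv
    simpa using h
  · rintro ⟨z1, z2, z3⟩ hz
    simp only [Finset.mem_erase, Finset.mem_filter, Finset.mem_univ, true_and] at hz
    obtain ⟨hz0, hz⟩ := hz
    by_cases h1 : z1 = 0
    · subst h1
      have h2 : z2 = 0 := by simpa [herm] using hz
      subst h2
      have h3 : z3 ≠ 0 := by rintro rfl; exact hz0 rfl
      exact ⟨(Units.mk0 z3 h3, ⟨(0, 0, 1), by simp [herm], Or.inr rfl⟩), Finset.mem_univ _, by simp⟩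
    · refine ⟨(Units.mk0 z1 h1, ⟨z1⁻¹ • (z1, z2, z3), by rw [hs, hz, mul_zero],
        Or.inl (by simp [h1])⟩), Finset.mem_univ _, ?_⟩
      simp [h1]

/-- A Seidel matrix of the unitary two-graph, with the sign chosen so that its quadratic relation
`S² = q³ + (q² - q) S` has roots `q²` and `-q`. -/
theorem exists_conference_like (hφ : ∀ x, φ x = x ^ q) (hF : Fintype.card F = q ^ 2) (hq : Odd q) :
    ∃ S : Matrix (UPoint φ) (UPoint φ) ℤ, (∀ x y, S x y = S y x) ∧ (∀ x, S x x = 0) ∧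
      (∀ x y, x ≠ y → S x y = 1 ∨ S x y = -1) ∧
      S * S = (q ^ 3 : ℤ) • (1 : Matrix _ _ ℤ) + ((q : ℤ) ^ 2 - q) • S := by
  have hc := conj_conj hφ hF
  obtain ⟨η, hη1, hη0, hη⟩ := fiber_sum hφ hF hq
  have hηη : η * η = 1 := by rcases hη1 with rfl | rfl <;> norm_num
  have hsym : ∀ x y : UPoint φ, quadraticChar F (herm φ x.1 y.1) =
      quadraticChar F (herm φ y.1 x.1) := by
    intro x y
    rw [← conj_herm hc, char_conj hφ hq]
  have hone : ∀ x y : UPoint φ, x ≠ y → quadraticChar F (herm φ x.1 y.1) = 1 ∨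
      quadraticChar F (herm φ x.1 y.1) = -1 :=
    fun x y hxy => quadraticChar_dichotomy (herm_ne_zero hφ hF hxy)
  refine ⟨Matrix.of fun x y => -η * quadraticChar F (herm φ x.1 y.1), ?_, ?_, ?_, ?_⟩
  · intro x y; rw [Matrix.of_apply, Matrix.of_apply, hsym]
  · intro x; simp [x.2.1]
  · intro x y hxy
    rcases hη1 with rfl | rfl <;> rcases hone x y hxy with h | h <;>
      rw [Matrix.of_apply, h] <;> norm_num
  · ext x y
    rw [Matrix.mul_apply, Matrix.add_apply, Matrix.smul_apply, Matrix.smul_apply]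
    have e1 : ∀ z : UPoint φ, -η * quadraticChar F (herm φ x.1 z.1) *
        (-η * quadraticChar F (herm φ z.1 y.1)) =
        quadraticChar F (herm φ x.1 z.1) * quadraticChar F (herm φ z.1 y.1) := by
      intro z; linear_combination quadraticChar F (herm φ x.1 z.1) *
        quadraticChar F (herm φ z.1 y.1) * hηη
    simp only [Matrix.of_apply, e1]
    by_cases hxy : x = y
    · subst hxy
      rw [Matrix.one_apply_eq, x.2.1, ← Finset.add_sum_erase _ _ (Finset.mem_univ x),
        Finset.sum_congr rfl (g := fun _ => (1 : ℤ))]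
      · rw [Finset.sum_const, Finset.card_erase_of_mem (Finset.mem_univ _), Finset.card_univ,
          card_UPoint hφ hF]
        simp [x.2.1]
      · intro z hz
        rw [hsym z x]
        rcases hone x z (Finset.ne_of_mem_erase hz).symm with h | h <;> rw [h] <;> norm_num
    · rw [Matrix.one_apply_ne hxy]
      have hs := sum_isotropic (φ := φ) (fun z => quadraticChar F (herm φ x.1 z) *
        quadraticChar F (herm φ z y.1)) (by simp [herm]) (by
          intro u z hu
          have h1 : herm φ x.1 (u • z) = φ u * herm φ x.1 z := by simp [herm]; ring
          have h2 : herm φ (u • z) y.1 = u * herm φ z y.1 := by simp [herm]; ring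
          simp only [h1, h2, map_mul, char_conj hφ hq]
          linear_combination quadraticChar F (herm φ x.1 z) *
            quadraticChar F (herm φ z y.1) * quadraticChar_sq_one hu)
      rw [vector_sum hφ hF hq hη0 hη x.2.1 y.2.1 (herm_ne_zero hφ hF hxy), hF] at hs
      have h2 := two_le_q hF
      have hne : ((q : ℤ) ^ 2 - 1) ≠ 0 := by
        have : (2 : ℤ) ≤ q := by exact_mod_cast h2
        nlinarith
      apply mul_left_cancel₀ hne
      push_cast at hs
      rw [← hs, smul_eq_mul, smul_eq_mul]
      ring

end Herm

/-! ### Variational bounds for sorted eigenvalues -/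

section Spectral

/-- At least `j + 1` values of `f` are at most the entry of index `j` in the increasing
rearrangement of `f`, and at least `n - j` are at least that entry. -/
theorem sort_counts {n : ℕ} (f : Fin n → ℝ) (j : ℕ) (hj : j < n) :
    (∃ S : Finset (Fin n), j + 1 ≤ S.card ∧
      ∀ i ∈ S, f i ≤ ((Finset.univ.val.map f).sort (· ≤ ·)).getD j 0) ∧
    (∃ S : Finset (Fin n), n - j ≤ S.card ∧
      ∀ i ∈ S, ((Finset.univ.val.map f).sort (· ≤ ·)).getD j 0 ≤ f i) := by
  set l := (Finset.univ.val.map f).sort (· ≤ ·) with hl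
  have hlen : l.length = n := by simp [hl]
  have hjl : j < l.length := by omega
  have hsort : l.Pairwise (· ≤ ·) := Multiset.pairwise_sort _ _
  have hc : ∀ p : ℝ → Prop, ∀ [DecidablePred p],
      (Finset.univ.filter fun i => p (f i)).card = l.countP (fun x => decide (p x)) := by
    intro p _
    have h1 : (l : Multiset ℝ) = Finset.univ.val.map f := Multiset.sort_eq _ _
    rw [← Multiset.coe_countP, h1, Multiset.countP_map]
    rfl
  have hg : l.getD j 0 = l[j] := by simp [hjl]
  rw [hg]
  have hle : ∀ a b (ha : a < l.length) (hb : b < l.length), a ≤ b → l[a] ≤ l[b] := by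
    intro a b ha hb hab
    rcases hab.eq_or_lt with rfl | h
    · exact le_rfl
    · exact List.pairwise_iff_getElem.1 hsort a b ha hb h
  refine ⟨⟨Finset.univ.filter fun i => f i ≤ l[j], ?_, by simp⟩,
    ⟨Finset.univ.filter fun i => l[j] ≤ f i, ?_, by simp⟩⟩
  · rw [hc (fun x => x ≤ l[j])]
    have h1 : (l.take (j + 1)).countP (fun x => decide (x ≤ l[j])) = j + 1 := by
      rw [List.countP_eq_length.2, List.length_take, min_eq_left (by omega)]
      intro x hx
      obtain ⟨i, hi, rfl⟩ := List.getElem_of_mem hx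
      rw [List.length_take] at hi
      simp only [List.getElem_take, decide_eq_true_eq]
      exact hle _ _ _ _ (by omega)
    rw [← h1]
    exact (List.take_sublist _ _).countP_le
  · rw [hc (fun x => l[j] ≤ x)]
    have h1 : (l.drop j).countP (fun x => decide (l[j] ≤ x)) = n - j := by
      rw [List.countP_eq_length.2, List.length_drop, hlen]
      intro x hx
      obtain ⟨i, hi, rfl⟩ := List.getElem_of_mem hx
      rw [List.length_drop] at hi
      simp only [List.getElem_drop, decide_eq_true_eq]
      exact hle _ _ _ _ (by omega)
    rw [← h1]
    exact (List.drop_sublist _ _).countP_le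

/-- A subspace `W` of dimension larger than `n - |S|` contains a nonzero vector in the span of the
eigenvectors indexed by `S`; `c` is its coordinate vector in the eigenbasis. -/
theorem exists_spectral_coords {n : ℕ} {A : Matrix (Fin n) (Fin n) ℝ} (hA : A.IsHermitian)
    (S : Finset (Fin n)) (W : Submodule ℝ (Fin n → ℝ))
    (h : n < S.card + Module.finrank ℝ W) :
    ∃ w ∈ W, 0 < w ⬝ᵥ w ∧ ∃ c : Fin n → ℝ, w ⬝ᵥ w = ∑ i ∈ S, c i ^ 2 ∧
      w ⬝ᵥ (A *ᵥ w) = ∑ i ∈ S, hA.eigenvalues i * c i ^ 2 := by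
  set u := hA.eigenvectorBasis with hu
  -- on the kernel of `L` the coordinates outside `S` vanish
  let L : W →ₗ[ℝ] ({i // i ∉ S} → ℝ) :=
    { toFun := fun w i => (u i).ofLp ⬝ᵥ (w : Fin n → ℝ)
      map_add' := fun x y => by ext i; simp [dotProduct_add]
      map_smul' := fun r x => by ext i; simp [dotProduct_smul] }
  have hlt : Module.finrank ℝ ({i // i ∉ S} → ℝ) < Module.finrank ℝ W := by
    rw [Module.finrank_fintype_fun_eq_card, Fintype.card_subtype_compl]
    simp
    have := S.card_le_univ
    simp at this
    omega
  obtain ⟨⟨w, hw⟩, hwk, hw0⟩ := (Submodule.ne_bot_iff _).1 (LinearMap.ker_ne_bot_of_finrank_lt (f := L) hlt)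
  have hc0 : ∀ i, i ∉ S → (u i).ofLp ⬝ᵥ w = 0 := fun i hi => congrFun (LinearMap.mem_ker.1 hwk) ⟨i, hi⟩
  have hw0' : w ≠ 0 := fun h => hw0 (by simpa using h)
  have parseval : ∀ v : Fin n → ℝ, w ⬝ᵥ v = ∑ i ∈ S, ((u i).ofLp ⬝ᵥ w) * ((u i).ofLp ⬝ᵥ v) := by
    intro v
    have := u.sum_inner_mul_inner (WithLp.toLp 2 w) (WithLp.toLp 2 v)
    simp only [EuclideanSpace.inner_eq_star_dotProduct, star_trivial] at this
    rw [dotProduct_comm w v, ← this, ← Finset.sum_subset (Finset.subset_univ S)]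
    · exact Finset.sum_congr rfl fun i _ => by rw [dotProduct_comm v]
    · intro i _ hi; rw [hc0 i hi, zero_mul]
  refine ⟨w, hw, ?_, fun i => (u i).ofLp ⬝ᵥ w, ?_, ?_⟩
  · exact lt_of_le_of_ne (Finset.sum_nonneg fun i _ => mul_self_nonneg _)
      (fun h => hw0' (dotProduct_self_eq_zero.1 h.symm))
  · rw [parseval]; exact Finset.sum_congr rfl fun i _ => by ring
  · rw [parseval]
    refine Finset.sum_congr rfl fun i _ => ?_
    have : (u i).ofLp ⬝ᵥ (A *ᵥ w) = hA.eigenvalues i * ((u i).ofLp ⬝ᵥ w) := by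
      rw [dotProduct_mulVec, ← mulVec_transpose, ← conjTranspose_eq_transpose_of_trivial, hA.eq,
        hA.mulVec_eigenvectorBasis, smul_dotProduct, smul_eq_mul]
    rw [this]; ring

theorem le_eigAsc {n : ℕ} {A : Matrix (Fin n) (Fin n) ℝ} (hA : A.IsHermitian)
    {j : ℕ} (hj : j < n) (W : Submodule ℝ (Fin n → ℝ)) (hW : n - j ≤ Module.finrank ℝ W) {c : ℝ}
    (hc : ∀ w ∈ W, c * (w ⬝ᵥ w) ≤ w ⬝ᵥ (A *ᵥ w)) : c ≤ (eigAsc A).getD j 0 := by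
  obtain ⟨S, h, hS⟩ := (sort_counts hA.eigenvalues j hj).1
  simp only [eigAsc, dif_pos hA]
  obtain ⟨w, hw, hpos, a, h1, h2⟩ := exists_spectral_coords hA S W (by omega)
  refine le_of_mul_le_mul_right ((hc w hw).trans ?_) hpos
  rw [h2, h1, Finset.mul_sum]
  refine Finset.sum_le_sum fun i hi => mul_le_mul_of_nonneg_right ?_ (sq_nonneg _)
  exact hS i hi

theorem eigAsc_le {n : ℕ} {A : Matrix (Fin n) (Fin n) ℝ} (hA : A.IsHermitian)
    {j : ℕ} (hj : j < n) (W : Submodule ℝ (Fin n → ℝ)) (hW : j + 1 ≤ Module.finrank ℝ W) {c : ℝ}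
    (hc : ∀ w ∈ W, w ⬝ᵥ (A *ᵥ w) ≤ c * (w ⬝ᵥ w)) : (eigAsc A).getD j 0 ≤ c := by
  obtain ⟨S, h, hS⟩ := (sort_counts hA.eigenvalues j hj).2
  simp only [eigAsc, dif_pos hA]
  obtain ⟨w, hw, hpos, a, h1, h2⟩ := exists_spectral_coords hA S W (by omega)
  refine le_of_mul_le_mul_right (le_trans ?_ (hc w hw)) hpos
  rw [h2, h1, Finset.mul_sum]
  refine Finset.sum_le_sum fun i hi => mul_le_mul_of_nonneg_right ?_ (sq_nonneg _)
  exact hS i hi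

/-- By Gershgorin, adjacency eigenvalues are at most `n` in absolute value; for `k` outside
`1, …, n` the bound still holds, whichever value `graphEig` takes there. -/
theorem abs_graphEig_le {n : ℕ} (G : SimpleGraph (Fin n)) (k : ℕ) : |graphEig G k| ≤ n := by
  classical
  unfold graphEig eigval
  rw [List.getD_eq_getElem?_getD]
  rcases h : (eigAsc (G.adjMatrix ℝ))[n - k]? with _ | a
  · simp
  · have hA : (G.adjMatrix ℝ).IsHermitian := by
      rw [Matrix.IsHermitian, conjTranspose_eq_transpose_of_trivial, SimpleGraph.transpose_adjMatrix]
    have hm := List.mem_of_getElem? h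
    simp only [eigAsc, dif_pos hA, Multiset.mem_sort, Multiset.mem_map] at hm
    obtain ⟨i, -, rfl⟩ := hm
    have he : Module.End.HasEigenvalue (Matrix.toLin' (G.adjMatrix ℝ)) (hA.eigenvalues i) := by
      rw [Module.End.hasEigenvalue_iff_mem_spectrum, Matrix.spectrum_toLin']
      exact hA.eigenvalues_mem_spectrum_real i
    obtain ⟨r, hr⟩ := eigenvalue_mem_ball he
    have hs : ∑ j ∈ Finset.univ.erase r, ‖G.adjMatrix ℝ r j‖ ≤ n := by
      calc _ ≤ ∑ j ∈ Finset.univ.erase r, (1 : ℝ) := Finset.sum_le_sum fun j _ => by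
            rw [SimpleGraph.adjMatrix_apply]; split_ifs <;> simp
        _ ≤ ∑ j : Fin n, (1 : ℝ) := Finset.sum_le_univ_sum_of_nonneg fun _ => zero_le_one
        _ = n := by simp
    simp at hr
    simpa using hr.trans (by simpa using hs)

/-- Any adjacency matrix indexed by a type of cardinality `n` comes, after relabelling, from a graph
on `Fin n`. -/
theorem exists_graph {V : Type*} [Fintype V] [DecidableEq V] {n : ℕ} (hn : Fintype.card V = n)
    (B : Matrix V V ℝ) (hB : B.IsAdjMatrix) :
    ∃ (e : V ≃ Fin n) (G : SimpleGraph (Fin n)), ∀ k,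
      graphEig G k = (eigAsc (B.submatrix e.symm e.symm)).getD (n - k) 0 := by
  classical
  let e := Fintype.equivFinOfCardEq hn
  have hB' : (B.submatrix e.symm e.symm).IsAdjMatrix :=
    ⟨fun i j => hB.zero_or_one _ _, by
      rw [Matrix.IsSymm, Matrix.transpose_submatrix, hB.symm.eq], fun i => hB.apply_diag _⟩
  refine ⟨e, hB'.toGraph, fun k => ?_⟩
  have : hB'.toGraph.adjMatrix ℝ = B.submatrix e.symm e.symm := by
    ext i j
    rw [SimpleGraph.adjMatrix_apply]
    rcases hB'.zero_or_one i j with h | h <;> rw [h] <;>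
      simp [Matrix.IsAdjMatrix.toGraph] at h ⊢ <;> simp [h]
  unfold graphEig eigval
  exact congrArg (fun M => (eigAsc M).getD (n - k) 0) (by convert this)

theorem form_submatrix {V : Type*} [Fintype V] {n : ℕ} (e : V ≃ Fin n) (B : Matrix V V ℝ)
    (w : V → ℝ) : (w ∘ e.symm) ⬝ᵥ (B.submatrix e.symm e.symm *ᵥ (w ∘ e.symm)) = w ⬝ᵥ (B *ᵥ w) ∧
    (w ∘ e.symm) ⬝ᵥ (w ∘ e.symm) = w ⬝ᵥ w := by
  have h : ∀ a b : V → ℝ, (a ∘ e.symm) ⬝ᵥ (b ∘ e.symm) = a ⬝ᵥ b := fun a b => by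
    simp [dotProduct, Equiv.sum_comp e.symm fun i => a i * b i]
  refine ⟨?_, h w w⟩
  rw [← h]
  congr 1
  ext i
  exact h _ _

theorem exists_graph_lower {V : Type*} [Fintype V] [DecidableEq V] {n : ℕ}
    (hn : Fintype.card V = n) (B : Matrix V V ℝ) (hB : B.IsAdjMatrix) {k : ℕ} (hk : 1 ≤ k)
    (hkn : k ≤ n) (W : Submodule ℝ (V → ℝ)) (hW : k ≤ Module.finrank ℝ W) {c : ℝ}
    (hc : ∀ w ∈ W, c * (w ⬝ᵥ w) ≤ w ⬝ᵥ (B *ᵥ w)) :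
    ∃ G : SimpleGraph (Fin n), c ≤ graphEig G k := by
  obtain ⟨e, G, hG⟩ := exists_graph hn B hB
  refine ⟨G, ?_⟩
  rw [hG]
  let E := LinearEquiv.funCongrLeft ℝ ℝ e.symm
  refine le_eigAsc ?_ (by omega) (W.map E.toLinearMap) ?_ ?_
  · rw [Matrix.IsHermitian, conjTranspose_eq_transpose_of_trivial, Matrix.transpose_submatrix,
      hB.symm.eq]
  · rw [LinearEquiv.finrank_map_eq]; omega
  · rintro _ ⟨w, hw, rfl⟩
    have := form_submatrix e B w
    exact (this.2.symm ▸ this.1.symm ▸ hc w hw :)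

/-- The index `n - k + 1` selects the `k`-th smallest eigenvalue. -/
theorem exists_graph_upper {V : Type*} [Fintype V] [DecidableEq V] {n : ℕ}
    (hn : Fintype.card V = n) (B : Matrix V V ℝ) (hB : B.IsAdjMatrix) {k : ℕ} (hk : 1 ≤ k)
    (hkn : k ≤ n) (W : Submodule ℝ (V → ℝ)) (hW : k ≤ Module.finrank ℝ W) {c : ℝ}
    (hc : ∀ w ∈ W, w ⬝ᵥ (B *ᵥ w) ≤ c * (w ⬝ᵥ w)) :
    ∃ G : SimpleGraph (Fin n), graphEig G (n - k + 1) ≤ c := by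
  obtain ⟨e, G, hG⟩ := exists_graph hn B hB
  refine ⟨G, ?_⟩
  rw [hG]
  let E := LinearEquiv.funCongrLeft ℝ ℝ e.symm
  refine eigAsc_le ?_ (by omega) (W.map E.toLinearMap) ?_ ?_
  · rw [Matrix.IsHermitian, conjTranspose_eq_transpose_of_trivial, Matrix.transpose_submatrix,
      hB.symm.eq]
  · rw [LinearEquiv.finrank_map_eq]; omega
  · rintro _ ⟨w, hw, rfl⟩
    have := form_submatrix e B w
    exact (this.2.symm ▸ this.1.symm ▸ hc w hw :)

end Spectral

/-! ### The eigenspace and the final estimate -/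

/-- A Seidel matrix of order `q³ + 1` with `q²` as an eigenvalue of multiplicity `q² - q + 1`. -/
theorem exists_seidel {q : ℕ} (hq : ∃ p m : ℕ, p.Prime ∧ Odd p ∧ 0 < m ∧ q = p ^ m) :
    ∃ (P : Type) (_ : Fintype P) (_ : DecidableEq P) (S : Matrix P P ℝ) (W : Submodule ℝ (P → ℝ)),
      Fintype.card P = q ^ 3 + 1 ∧ S.IsSymm ∧ (∀ x, S x x = 0) ∧
      (∀ x y, x ≠ y → S x y = 1 ∨ S x y = -1) ∧
      Module.finrank ℝ W = q ^ 2 - q + 1 ∧ ∀ w ∈ W, S *ᵥ w = (q : ℝ) ^ 2 • w := by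
  classical
  obtain ⟨p, m, hp, hodd, hm, rfl⟩ := hq
  have : Fact p.Prime := ⟨hp⟩
  let F := GaloisField p (2 * m)
  have : Fintype F := Fintype.ofFinite F
  let φ : F →+* F := iterateFrobenius F p m
  have hφ : ∀ x, φ x = x ^ (p ^ m) := fun x => iterateFrobenius_def p m x
  have hF : Fintype.card F = (p ^ m) ^ 2 := by
    rw [← Nat.card_eq_fintype_card, GaloisField.card p (2 * m) (by omega), ← pow_mul, mul_comm]
  have hqo : Odd (p ^ m) := hodd.pow
  obtain ⟨S, hsym, hdiag, hone, hsq⟩ := exists_conference_like hφ hF hqo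
  have hcard := card_UPoint hφ hF
  have hq2 := two_le_q hF
  generalize p ^ m = q at *
  have hq0 : (0 : ℝ) < q := by exact_mod_cast (by omega : 0 < q)
  set T : Matrix (UPoint φ) (UPoint φ) ℝ := S.map (Int.cast) with hT
  have hTsq : T * T = ((q : ℝ) ^ 3) • (1 : Matrix _ _ ℝ) + ((q : ℝ) ^ 2 - q) • T := by
    have := congrArg (fun M : Matrix (UPoint φ) (UPoint φ) ℤ => M.map (Int.castRingHom ℝ)) hsq
    simp only [Matrix.map_mul] at this
    refine Eq.trans this ?_
    ext i j
    simp only [hT, Matrix.map_apply, Matrix.add_apply, Matrix.smul_apply, Matrix.one_apply,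
      smul_eq_mul, eq_intCast]
    push_cast
    rfl
  set r : ℝ := (q : ℝ) ^ 2 + q with hr
  have hr0 : r ≠ 0 := by positivity
  -- `E` is the projection onto the `q²`-eigenspace along the `-q`-eigenspace; its trace is its rank
  set E : Matrix (UPoint φ) (UPoint φ) ℝ := r⁻¹ • (T + (q : ℝ) • 1) with hE
  have hEE : E * E = E := by
    have h1 : (T + (q : ℝ) • 1) * (T + (q : ℝ) • 1) = r • (T + (q : ℝ) • 1) := by
      simp only [add_mul, mul_add, hTsq, Matrix.smul_mul, Matrix.mul_smul, Matrix.one_mul,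
        Matrix.mul_one, hr]
      module
    rw [hE, Matrix.smul_mul, Matrix.mul_smul, h1, smul_smul r⁻¹ r, inv_mul_cancel₀ hr0, one_smul]
  have hTE : T * E = ((q : ℝ) ^ 2) • E := by
    rw [hE, Matrix.mul_smul, smul_comm]
    congr 1
    simp only [mul_add, hTsq, Matrix.mul_smul, Matrix.mul_one]
    module
  have hidem : IsIdempotentElem (Matrix.toLin' E) := by
    rw [IsIdempotentElem, Module.End.mul_eq_comp, ← Matrix.toLin'_mul, hEE]
  refine ⟨UPoint φ, inferInstance, inferInstance, T, LinearMap.range (Matrix.toLin' E), hcard,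
    ?_, ?_, ?_, ?_, ?_⟩
  · ext x y; simp [hT, hsym x y]
  · intro x; simp [hT, hdiag]
  · intro x y hxy
    rcases hone x y hxy with h | h <;> simp [hT, h]
  · have htr := (LinearMap.IsIdempotentElem.isProj_range _ hidem).trace
    rw [Matrix.trace_toLin'_eq, hE, Matrix.trace_smul, Matrix.trace_add, Matrix.trace_smul,
      Matrix.trace_one, hcard] at htr
    have h0 : T.trace = 0 := by simp [Matrix.trace, hT, hdiag]
    rw [h0, zero_add, smul_eq_mul, smul_eq_mul, inv_mul_eq_div, div_eq_iff hr0] at htr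
    have h2 : (((q ^ 2 - q + 1 : ℕ) : ℝ)) = (q : ℝ) ^ 2 - q + 1 := by
      rw [Nat.cast_add, Nat.cast_sub (by nlinarith)]; push_cast; ring
    have h3 : ((q ^ 2 - q + 1 : ℕ) : ℝ) =
        (Module.finrank ℝ (LinearMap.range (Matrix.toLin' E)) : ℝ) := by
      apply mul_right_cancel₀ hr0
      rw [← htr, h2, hr]; push_cast; ring
    exact_mod_cast h3.symm
  · rintro _ ⟨v, rfl⟩
    rw [Matrix.toLin'_apply, Matrix.mulVec_mulVec, hTE, Matrix.smul_mulVec]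

theorem ratio_gt {q : ℝ} (hq : 3 ≤ q) :
    1 / (2 * Real.sqrt (q ^ 2 - q) + 1) < (q ^ 2 + 1) / 2 / (q ^ 3 + 1) := by
  have h0 : 0 < q ^ 3 + 1 := by positivity
  have h1 : 0 < 2 * (q ^ 2 + 1) := by positivity
  have hs : (2 * q ^ 3 - q ^ 2 + 1) / (2 * (q ^ 2 + 1)) < Real.sqrt (q ^ 2 - q) := by
    apply Real.lt_sqrt_of_sq_lt
    rw [div_pow, div_lt_iff₀ (by positivity)]
    -- the difference of the two sides after clearing denominators; it is expanded around `q = 3`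
    have : 0 < 7 * q ^ 4 - 12 * q ^ 3 + 6 * q ^ 2 - 4 * q - 1 := by
      have h3 : 0 ≤ q - 3 := by linarith
      have : 7 * q ^ 4 - 12 * q ^ 3 + 6 * q ^ 2 - 4 * q - 1 =
        7 * (q - 3) ^ 4 + 72 * (q - 3) ^ 3 + 276 * (q - 3) ^ 2 + 464 * (q - 3) + 284 := by ring
      rw [this]; positivity
    nlinarith
  rw [div_lt_iff₀ h1] at hs
  rw [div_div, div_lt_div_iff₀ (by positivity) (by positivity)]
  nlinarith

theorem stmt3 (q k : ℕ) (hq : ∃ p m : ℕ, p.Prime ∧ Odd p ∧ 0 < m ∧ q = p ^ m)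
    (hk : k = q ^ 2 - q + 1) :
    cPos k > 1 / (2 * Real.sqrt ((k : ℝ) - 1) + 1) ∧
    cNeg (k - 1) > 1 / (2 * Real.sqrt ((k : ℝ) - 1) + 1) := by
  have hq3 : 3 ≤ q := by
    obtain ⟨p, m, hp, hodd, hm, rfl⟩ := hq
    have h3 : 3 ≤ p := by
      have := hp.two_le
      rw [Nat.odd_iff] at hodd
      omega
    exact h3.trans (Nat.le_self_pow hm.ne' p)
  obtain ⟨P, _, _, S, W, hcard, hsym, hdiag, hone, hW, hS⟩ := exists_seidel hq
  have hsq : q ≤ q ^ 2 := by nlinarith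
  have hkr : (k : ℝ) - 1 = (q : ℝ) ^ 2 - q := by
    rw [hk, Nat.cast_add, Nat.cast_sub hsq]; push_cast; ring
  have hq3' : (3 : ℝ) ≤ q := by exact_mod_cast hq3
  have hk6 : 2 ≤ k := by
    have : q + 1 ≤ q ^ 2 := by nlinarith
    omega
  have hkN : k ≤ q ^ 3 + 1 := by
    have : q ^ 2 ≤ q ^ 3 := Nat.pow_le_pow_right (by omega) (by omega)
    omega
  rw [hkr]
  have hgap := ratio_gt hq3'
  set R := 1 / (2 * Real.sqrt ((q : ℝ) ^ 2 - q) + 1) with hR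
  have hN : (0 : ℝ) < (q : ℝ) ^ 3 + 1 := by positivity
  rw [← hk] at hW
  constructor
  -- the blow-up size `t` is chosen so that the loss `1 / (t (q³ + 1))` is below the gap
  · obtain ⟨t, ht⟩ := exists_nat_gt (1 / (((q : ℝ) ^ 2 + 1) / 2 / (q ^ 3 + 1) - R))
    have hgap' : 0 < ((q : ℝ) ^ 2 + 1) / 2 / (q ^ 3 + 1) - R := sub_pos.2 hgap
    have ht0 : (0 : ℝ) < t := lt_trans (by positivity) ht
    have ht0' : 0 < t := by exact_mod_cast ht0
    have : Nonempty (Fin t) := ⟨⟨0, ht0'⟩⟩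
    -- `((J + I + S) / 2) ⊗ J - I`: two copies of the same vertex are adjacent
    let B : Matrix (P × Fin t) (P × Fin t) ℝ := Matrix.of fun a b =>
      (1 + (1 : Matrix P P ℝ) a.1 b.1 + S a.1 b.1) / 2 -
        (1 : Matrix (P × Fin t) (P × Fin t) ℝ) a b
    have hB : B.IsAdjMatrix := by
      refine ⟨?_, ?_, ?_⟩
      · rintro ⟨x, i⟩ ⟨y, j⟩
        by_cases hxy : x = y
        · subst hxy
          by_cases hij : i = j
          · subst hij; left; simp [B, hdiag]
          · right; simp [B, hdiag, Matrix.one_apply, hij]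
        · rcases hone x y hxy with h | h <;> simp [B, h, Matrix.one_apply, hxy]
      · ext a b
        simp [B, Matrix.one_apply, hsym.apply a.1 b.1, eq_comm]
      · intro a; simp [B, hdiag]
    let L : (P → ℝ) →ₗ[ℝ] (P × Fin t → ℝ) := LinearMap.funLeft ℝ ℝ Prod.fst
    have hL : Function.Injective L :=
      LinearMap.funLeft_injective_of_surjective ℝ ℝ _ Prod.fst_surjective
    have hnc : Fintype.card (P × Fin t) = (q ^ 3 + 1) * t := by simp [hcard]
    have hkn : k ≤ (q ^ 3 + 1) * t := hkN.trans (Nat.le_mul_of_pos_right _ ht0')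
    obtain ⟨G, hG⟩ := exists_graph_lower hnc B hB (k := k) (by omega)
      hkn (W.map L)
      (by rw [← (Submodule.equivMapOfInjective L hL W).finrank_eq, hW])
      (c := t * ((q : ℝ) ^ 2 + 1) / 2 - 1) (by
        rintro _ ⟨w, hw, rfl⟩
        have hdot : ∀ v : P → ℝ, L w ⬝ᵥ L v = t * (w ⬝ᵥ v) := by
          intro v
          simp [L, dotProduct, Fintype.sum_prod_type, LinearMap.funLeft_apply, Finset.mul_sum]
        -- the form of `B` exceeds `c (v ⬝ᵥ v)`, `v = L w`, by `(t² / 2) (∑ y, w y)²`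
        have hBw : B *ᵥ L w = L (((t : ℝ) / 2 * ∑ y, w y) • (fun _ => 1) +
            (t * ((q : ℝ) ^ 2 + 1) / 2 - 1) • w) := by
          ext ⟨x, i⟩
          have h1 : ∑ y, S x y * w y = (q : ℝ) ^ 2 * w x := congrFun (hS w hw) x
          have h2 : ∑ y, (1 + (1 : Matrix P P ℝ) x y + S x y) * w y =
              ∑ y, w y + w x + (q : ℝ) ^ 2 * w x := by
            simp only [add_mul, Finset.sum_add_distrib, h1, one_mul]
            simp [Matrix.one_apply]
          have h3 : (B *ᵥ L w) (x, i) =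
              ∑ y, (t : ℝ) * ((1 + (1 : Matrix P P ℝ) x y + S x y) * w y / 2) - w x := by
            have h4 : ((1 : Matrix (P × Fin t) (P × Fin t) ℝ) *ᵥ L w) (x, i) = w x := by
              rw [Matrix.one_mulVec]; rfl
            rw [← h4]
            simp only [Matrix.mulVec, dotProduct, B, Matrix.of_apply, sub_mul,
              Finset.sum_sub_distrib]
            congr 1
            rw [Fintype.sum_prod_type]
            refine Finset.sum_congr rfl fun y _ => ?_
            change ∑ _j : Fin t, (1 + (1 : Matrix P P ℝ) x y + S x y) / 2 * w y = _
            rw [Finset.sum_const, Finset.card_univ, Fintype.card_fin, nsmul_eq_mul]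
            ring
          rw [h3, ← Finset.mul_sum, ← Finset.sum_div, h2]
          simp [L, LinearMap.funLeft_apply]
          ring
        rw [hBw, hdot, hdot, dotProduct_add, dotProduct_smul, dotProduct_smul]
        have h5 : w ⬝ᵥ (fun _ => (1 : ℝ)) = ∑ y, w y := by simp [dotProduct]
        rw [h5, smul_eq_mul, smul_eq_mul]
        nlinarith [mul_nonneg (mul_nonneg ht0.le ht0.le) (mul_self_nonneg (∑ y, w y))])
    have hbdd : BddAbove { x : ℝ | ∃ n : ℕ, k ≤ n ∧ ∃ G : SimpleGraph (Fin n),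
        x = graphEig G k / n } := by
      refine ⟨1, ?_⟩
      rintro _ ⟨n, hn, G, rfl⟩
      exact div_le_one_of_le₀ ((le_abs_self _).trans (abs_graphEig_le G k)) (Nat.cast_nonneg n)
    refine lt_of_lt_of_le ?_ (le_csSup hbdd ⟨_, hkn, G, rfl⟩)
    push_cast
    rw [lt_div_iff₀ (by positivity)]
    refine lt_of_lt_of_le ?_ hG
    rw [div_lt_iff₀ hgap'] at ht
    have h6 : (t : ℝ) * (((q : ℝ) ^ 2 + 1) / 2 / (q ^ 3 + 1) - R) * ((q : ℝ) ^ 3 + 1) =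
      t * (q ^ 2 + 1) / 2 - R * (((q : ℝ) ^ 3 + 1) * t) := by
      field_simp
    nlinarith [pow_pos (by linarith : (0 : ℝ) < q) 3]
  · let B : Matrix P P ℝ := Matrix.of fun x y => (1 - (1 : Matrix P P ℝ) x y - S x y) / 2
    have hB : B.IsAdjMatrix := by
      refine ⟨?_, ?_, ?_⟩
      · intro x y
        by_cases hxy : x = y
        · subst hxy; left; simp [B, hdiag]
        · rcases hone x y hxy with h | h <;> simp [B, h, Matrix.one_apply, hxy]
      · ext a b
        simp [B, Matrix.one_apply, hsym.apply a b, eq_comm]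
      · intro a; simp [B, hdiag]
    let f : (P → ℝ) →ₗ[ℝ] ℝ := ∑ y, LinearMap.proj y
    have hf : ∀ w, f w = ∑ y, w y := fun w => by simp [f]
    have hkn : k - 1 ≤ q ^ 3 + 1 := by omega
    -- restricting the `q²`-eigenspace to sum zero, where `J` vanishes, costs one dimension
    obtain ⟨G, hG⟩ := exists_graph_upper hcard B hB (k := k - 1) (by omega) hkn
      ((LinearMap.ker (f ∘ₗ W.subtype)).map W.subtype) (by
        rw [← (Submodule.equivMapOfInjective _ W.injective_subtype _).finrank_eq]
        have h1 := LinearMap.finrank_range_add_finrank_ker (f ∘ₗ W.subtype)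
        have h2 := (LinearMap.range (f ∘ₗ W.subtype)).finrank_le
        rw [Module.finrank_self] at h2
        omega) (c := -(((q : ℝ) ^ 2 + 1) / 2)) (by
        rintro _ ⟨⟨w, hw⟩, hwk, rfl⟩
        have h0 : ∑ y, w y = 0 := by rw [← hf]; exact hwk
        have hBw : B *ᵥ w = (-(((q : ℝ) ^ 2 + 1) / 2)) • w := by
          ext x
          have h1 : ∑ y, S x y * w y = (q : ℝ) ^ 2 * w x := congrFun (hS w hw) x
          have h2 : ∑ y, (1 - (1 : Matrix P P ℝ) x y - S x y) * w y =
              ∑ y, w y - w x - (q : ℝ) ^ 2 * w x := by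
            simp only [sub_mul, Finset.sum_sub_distrib, h1, one_mul]
            simp [Matrix.one_apply]
          have h3 : (B *ᵥ w) x = (∑ y, (1 - (1 : Matrix P P ℝ) x y - S x y) * w y) / 2 := by
            simp only [Matrix.mulVec, dotProduct, B, Matrix.of_apply, Finset.sum_div]
            exact Finset.sum_congr rfl fun y _ => by ring
          rw [h3, h2, h0]
          simp; ring
        simp only [Submodule.subtype_apply]
        rw [hBw, dotProduct_smul, smul_eq_mul])
    have hbdd : BddAbove { x : ℝ | ∃ n : ℕ, k - 1 ≤ n ∧ ∃ G : SimpleGraph (Fin n),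
        x = |graphEig G (n - (k - 1) + 1)| / n } := by
      refine ⟨1, ?_⟩
      rintro _ ⟨n, hn, G, rfl⟩
      exact div_le_one_of_le₀ (abs_graphEig_le G _) (Nat.cast_nonneg n)
    refine lt_of_lt_of_le ?_ (le_csSup hbdd ⟨_, hkn, G, rfl⟩)
    refine hgap.trans_le ?_
    push_cast
    gcongr
    rw [le_abs]
    right; linarith
end

section
/- Let k ≥ 1 and suppose A ∈ S_k. Then there exists a matrix B ∈ S_{2k} such that: (i) B has exactly k positive eigenvalues and exactly k negative eigenvalues (counted with multiplicity); and (ii) all rowsums of B are equal to 0. -/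
/-!
For a symmetric `±1` matrix of order `n` the squares of the eigenvalues sum to `n²`.  Hence
`A ∈ S_k` forces exactly `k` eigenvalues to be nonzero, each equal to `±n/√k`; in particular
`A³ = (n²/k) A` (`memS_cube`).  Let `H` be the Kronecker product of `!![1, 1; 1, -1]` and
`!![1, -1; -1, 1]`, a symmetric `±1` matrix of order `4` with zero row sums, zero trace and
`H³ = 8 H`.  Then `B = A ⊗ H` is a symmetric `±1` matrix of order `N = 4n` with zero row sums, zero
trace and `B³ = c² B`, where `c = N/√(2k)`.  Thus every eigenvalue of `B` is `0`, `c` or `-c`.  The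
vanishing trace shows that `c` and `-c` have the same multiplicity, and `∑ λ² = N²` shows that
these multiplicities add up to `2k`.
-/

open Matrix BigOperators

/-- `memS k A` says that `A` belongs to the class `S_k`: `A` is a symmetric
`(-1,1)`-matrix of order `n ≥ k` with `λ_k^*(A) = n / √k`. -/
def memS (k : ℕ) {n : ℕ} (A : Matrix (Fin n) (Fin n) ℝ) : Prop :=
  k ≤ n ∧ A.IsSymm ∧ (∀ i j, A i j = 1 ∨ A i j = -1) ∧
    singval A k = (n : ℝ) / Real.sqrt k

/-- The number of positive eigenvalues of `A`, counted with multiplicity. -/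
noncomputable def posCount {n : ℕ} (A : Matrix (Fin n) (Fin n) ℝ) : ℕ :=
  (eigAsc A).countP (fun x => decide (0 < x))

/-- The number of negative eigenvalues of `A`, counted with multiplicity. -/
noncomputable def negCount {n : ℕ} (A : Matrix (Fin n) (Fin n) ℝ) : ℕ :=
  (eigAsc A).countP (fun x => decide (x < 0))

open scoped Kronecker

/-! ### Traces and cubes of symmetric matrices -/

/-- The eigenvalues of a symmetric `±1` matrix of order `n` have square sum `n²`. -/
lemma sum_eigenvalues_sq {n : ℕ} {A : Matrix (Fin n) (Fin n) ℝ} (hA : A.IsHermitian)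
    (h1 : ∀ i j, A i j = 1 ∨ A i j = -1) :
    ∑ i, hA.eigenvalues i ^ 2 = (n : ℝ) ^ 2 := by
  have hs : ∀ i j, A i j = A j i := fun i j => by
    simpa using (hA.apply i j).symm
  have ht : (A * A).trace = (n : ℝ) ^ 2 := by
    have : ∀ i j, A i j * A j i = 1 := fun i j => by
      rw [← hs i j]; rcases h1 i j with h | h <;> rw [h] <;> norm_num
    simp [Matrix.trace, Matrix.mul_apply, this, sq]
  have hspec := hA.spectral_theorem
  set D : Matrix (Fin n) (Fin n) ℝ := diagonal (RCLike.ofReal ∘ hA.eigenvalues) with hD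
  have h2 : A * A = Unitary.conjStarAlgAut ℝ _ hA.eigenvectorUnitary (D * D) := by
    rw [map_mul, ← hspec]
  rw [← ht, h2, Unitary.conjStarAlgAut_apply, Matrix.trace_mul_cycle,
    Unitary.coe_star_mul_self, one_mul, hD, diagonal_mul_diagonal, trace_diagonal]
  simp [sq]

/-- The relation `x³ = d x` passes from the eigenvalues of a symmetric matrix to the matrix. -/
lemma cube_of_eigenvalues {n : ℕ} {A : Matrix (Fin n) (Fin n) ℝ} (hA : A.IsHermitian) (d : ℝ)
    (h : ∀ i, hA.eigenvalues i ^ 3 = d * hA.eigenvalues i) : A * A * A = d • A := by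
  have hspec := hA.spectral_theorem
  set D : Matrix (Fin n) (Fin n) ℝ := diagonal (RCLike.ofReal ∘ hA.eigenvalues) with hD
  have h3 : D * D * D = d • D := by
    rw [hD, diagonal_mul_diagonal, diagonal_mul_diagonal, ← diagonal_smul]
    congr 1
    ext i
    have := h i
    simp only [Function.comp, RCLike.ofReal_real_eq_id, id, Pi.smul_apply, smul_eq_mul]
    rw [← this]; ring
  rw [hspec, ← map_mul, ← map_mul, h3, map_smul]

lemma eigenvalues_of_cube {n : ℕ} {A : Matrix (Fin n) (Fin n) ℝ} (hA : A.IsHermitian) (d : ℝ)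
    (h : A * A * A = d • A) (i : Fin n) :
    hA.eigenvalues i ^ 3 = d * hA.eigenvalues i := by
  set v : Fin n → ℝ := ⇑(hA.eigenvectorBasis i) with hv
  have h1 : A *ᵥ v = hA.eigenvalues i • v := hA.mulVec_eigenvectorBasis i
  have h2 := congrArg (· *ᵥ v) h
  simp only [← mulVec_mulVec, smul_mulVec, h1, mulVec_smul, smul_smul] at h2
  have hne : v ≠ 0 := by
    intro h0
    apply hA.eigenvectorBasis.orthonormal.ne_zero i
    ext j
    exact congrFun h0 j
  have := smul_left_injective ℝ hne h2
  rw [← this]; ring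

/-! ### The spectrum of a matrix in `S_k` -/

lemma List.forall_eq_zero_of_sum_le {l : List ℝ} (h : ∀ x ∈ l, 0 ≤ x) (hs : l.sum ≤ 0) :
    ∀ x ∈ l, x = 0 := by
  intro x hx
  exact le_antisymm ((List.single_le_sum h x hx).trans hs) (h x hx)

/-- If the `k`-th largest entry `c` of an ascending list of nonnegative reals satisfies
`∑ x² = k c²`, then every entry is `0` or `c`: the `k` largest entries already account for the
whole sum of squares. -/
lemma List.eq_zero_or_eq_of_sum_sq {l : List ℝ} {k : ℕ} {c : ℝ} (hl : l.Pairwise (· ≤ ·))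
    (h0 : ∀ x ∈ l, 0 ≤ x) (hk1 : 1 ≤ k) (hk : k ≤ l.length) (hc : l.getD (l.length - k) 0 = c)
    (hs : (l.map (· ^ 2)).sum = k * c ^ 2) : ∀ x ∈ l, x = 0 ∨ x = c := by
  have hlt : l.length - k < l.length := by omega
  have hc' : l[l.length - k] = c := by rw [← hc, List.getD_eq_getElem _ _ hlt]
  have hc0 : 0 ≤ c := hc' ▸ h0 _ (List.getElem_mem hlt)
  have hdrop : ∀ x ∈ l.drop (l.length - k), c ≤ x := by
    have hp := hl.drop (i := l.length - k)
    rw [List.drop_eq_getElem_cons hlt, hc'] at hp ⊢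
    intro x hx
    rcases List.mem_cons.1 hx with rfl | hx
    · exact le_rfl
    · exact List.rel_of_pairwise_cons hp hx
  set a := l.take (l.length - k) with ha
  set b := l.drop (l.length - k) with hb
  have hab : a ++ b = l := List.take_append_drop _ _
  have hbl : b.length = k := by rw [hb, List.length_drop]; omega
  rw [← hab, List.map_append, List.sum_append] at hs
  have hsub : ∀ t : List ℝ,
      (t.map (fun x => x ^ 2 - c ^ 2)).sum = (t.map (· ^ 2)).sum - t.length * c ^ 2 := by
    intro t
    induction t with
    | nil => simp
    | cons x t ih => simp only [List.map_cons, List.sum_cons, ih, List.length_cons]; push_cast; ring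
  have hsb := hsub b
  rw [hbl] at hsb
  have ha0 : ∀ y ∈ a.map (· ^ 2), (0 : ℝ) ≤ y := by
    intro y hy
    obtain ⟨x, -, rfl⟩ := List.mem_map.1 hy
    positivity
  have hb0 : ∀ y ∈ b.map (fun x => x ^ 2 - c ^ 2), (0 : ℝ) ≤ y := by
    intro y hy
    obtain ⟨x, hx, rfl⟩ := List.mem_map.1 hy
    have := hdrop x hx
    nlinarith
  have ha1 := List.sum_nonneg ha0
  have hb1 := List.sum_nonneg hb0
  intro x hx
  rw [← hab] at hx
  rcases List.mem_append.1 hx with hx | hx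
  · left
    have := List.forall_eq_zero_of_sum_le ha0 (by linarith) _ (List.mem_map_of_mem hx)
    simpa using this
  · right
    have := List.forall_eq_zero_of_sum_le hb0 (by linarith) _ (List.mem_map_of_mem hx)
    have h2 := hdrop x hx
    have : (x - c) * (x + c) = 0 := by linarith
    rcases mul_eq_zero.1 this with h | h <;> linarith

/-- The nonzero eigenvalues of `A ∈ S_k` are `±n/√k`, stated as a matrix identity so that it
carries over to Kronecker products. -/
lemma memS_cube {k : ℕ} (hk : 1 ≤ k) {n : ℕ} {A : Matrix (Fin n) (Fin n) ℝ} (h : memS k A) :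
    A * A * A = ((n : ℝ) ^ 2 / k) • A := by
  obtain ⟨hkn, hsym, h1, hsv⟩ := h
  have hA : A.IsHermitian := by
    rw [Matrix.IsHermitian, conjTranspose_eq_transpose_of_trivial]; exact hsym
  have hk0 : (0 : ℝ) < k := by exact_mod_cast hk
  have hc2 : ((n : ℝ) / √k) ^ 2 = (n : ℝ) ^ 2 / k := by
    rw [div_pow, Real.sq_sqrt hk0.le]
  set M : Multiset ℝ := Finset.univ.val.map (fun i => |hA.eigenvalues i|) with hM
  have hL : singAsc A = M.sort (· ≤ ·) := by
    unfold singAsc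
    rw [dif_pos hA]
  have hlen : (M.sort (· ≤ ·)).length = n := by simp [hM]
  have hsum : ((M.sort (· ≤ ·)).map (· ^ 2)).sum = k * ((n : ℝ) / √k) ^ 2 := by
    rw [← Multiset.sum_coe, ← Multiset.map_coe, Multiset.sort_eq, hM, Multiset.map_map, hc2]
    have := sum_eigenvalues_sq hA h1
    simp only [Function.comp_def, sq_abs]
    rw [mul_div_cancel₀ _ hk0.ne', ← this]
    rfl
  have key := List.eq_zero_or_eq_of_sum_sq (l := M.sort (· ≤ ·)) (k := k) (c := (n : ℝ) / √k)
    (Multiset.pairwise_sort _ _)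
    (by
      intro x hx
      rw [Multiset.mem_sort, hM, Multiset.mem_map] at hx
      obtain ⟨i, -, rfl⟩ := hx
      positivity)
    hk (by rw [hlen]; exact hkn)
    (by rw [hlen, ← hL]; exact hsv) hsum
  refine cube_of_eigenvalues hA _ fun i => ?_
  have hi := key |hA.eigenvalues i| (by
    rw [Multiset.mem_sort, hM]
    exact Multiset.mem_map_of_mem _ (Finset.mem_univ i))
  rcases hi with hi | hi
  · rw [abs_eq_zero.1 hi]; ring
  · rw [← hc2, ← hi, sq_abs]; ring

/-! ### A criterion for membership in `S_{2k}` -/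

/-- A multiset consisting of `0`s and exactly `p ≥ 1` copies of `c > 0` has `p`-th largest
element `c`. -/
lemma Multiset.sort_getD_of_two_values {M : Multiset ℝ} {N p : ℕ} {c : ℝ} (hc : 0 < c)
    (hp : 1 ≤ p) (hM : M = replicate (N - p) 0 + replicate p c) :
    (M.sort (· ≤ ·)).getD (N - p) 0 = c := by
  have : M.sort (· ≤ ·) = List.replicate (N - p) 0 ++ List.replicate p c := by
    apply List.Perm.eq_of_pairwise' (r := (· ≤ ·)) (Multiset.pairwise_sort _ _)
    · rw [List.pairwise_append]
      refine ⟨List.pairwise_replicate.2 (by simp), List.pairwise_replicate.2 (by simp), ?_⟩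
      intro a ha b hb
      rw [List.eq_of_mem_replicate ha, List.eq_of_mem_replicate hb]
      exact hc.le
    · rw [← Multiset.coe_eq_coe, Multiset.sort_eq, hM]
      rfl
  rw [this, List.getD_append_right _ _ _ _ (by simp)]
  simp [List.getD_eq_getElem?_getD, show 0 < p from hp]

/-- A symmetric `±1` matrix of order `N` with zero trace and `B³ = (N²/2k) B` lies in `S_{2k}` and
has `k` positive and `k` negative eigenvalues. -/
lemma memS_of_cube {k N : ℕ} (hk : 1 ≤ k) (hN : 1 ≤ N) {B : Matrix (Fin N) (Fin N) ℝ}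
    (hsym : B.IsSymm) (h1 : ∀ i j, B i j = 1 ∨ B i j = -1) (htr : B.trace = 0)
    (hcube : B * B * B = ((N : ℝ) ^ 2 / (2 * k : ℕ)) • B) :
    memS (2 * k) B ∧ posCount B = k ∧ negCount B = k := by
  have hB : B.IsHermitian := by
    rw [Matrix.IsHermitian, conjTranspose_eq_transpose_of_trivial]; exact hsym
  have hk0 : (0 : ℝ) < (2 * k : ℕ) := by exact_mod_cast (by omega)
  have hN0 : (0 : ℝ) < N := by exact_mod_cast hN
  set c : ℝ := (N : ℝ) / √(2 * k : ℕ) with hc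
  have hc0 : 0 < c := by positivity
  have hc2 : c ^ 2 = (N : ℝ) ^ 2 / (2 * k : ℕ) := by
    rw [hc, div_pow, Real.sq_sqrt hk0.le]
  set e := hB.eigenvalues with he
  have hev : ∀ i, e i = 0 ∨ e i = c ∨ e i = -c := by
    intro i
    have := eigenvalues_of_cube hB _ hcube i
    rw [← hc2] at this
    have h' : e i * ((e i - c) * (e i + c)) = 0 := by linear_combination this
    rcases mul_eq_zero.1 h' with h | h
    · exact .inl h
    rcases mul_eq_zero.1 h with h | h
    · exact .inr (.inl (by linarith))
    · exact .inr (.inr (by linarith))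
  set p := (Finset.univ.filter (fun i => 0 < e i)).card with hp
  set q := (Finset.univ.filter (fun i => e i < 0)).card with hq
  have hpR : (p : ℝ) = ∑ i, if 0 < e i then (1 : ℝ) else 0 := by simp [hp]
  have hqR : (q : ℝ) = ∑ i, if e i < 0 then (1 : ℝ) else 0 := by simp [hq]
  have hdiff : c * ((p : ℝ) - q) = 0 := by
    have : B.trace = ∑ i, e i := by simpa using hB.trace_eq_sum_eigenvalues
    rw [← htr, this, hpR, hqR, ← Finset.sum_sub_distrib, Finset.mul_sum]
    refine Finset.sum_congr rfl fun i _ => ?_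
    rcases hev i with h | h | h <;> simp [h, hc0, not_lt.2 hc0.le]
  have hsum : c ^ 2 * ((p : ℝ) + q) = (N : ℝ) ^ 2 := by
    rw [← sum_eigenvalues_sq hB h1, hpR, hqR, ← Finset.sum_add_distrib, Finset.mul_sum]
    refine Finset.sum_congr rfl fun i _ => ?_
    rw [← he]
    rcases hev i with h | h | h <;> simp [h, hc0, not_lt.2 hc0.le]
  have hpq : p = q := by
    have := (mul_eq_zero.1 hdiff).resolve_left hc0.ne'
    exact_mod_cast sub_eq_zero.1 this
  have hpq2 : p + q = 2 * k := by
    rw [hc2, div_mul_eq_mul_div, div_eq_iff hk0.ne'] at hsum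
    have := mul_left_cancel₀ (by positivity) hsum
    exact_mod_cast this
  have hpk : p = k := by omega
  have hqk : q = k := by omega
  have hpos : posCount B = p := by
    unfold posCount eigAsc
    rw [dif_pos hB, ← Multiset.coe_countP, Multiset.sort_eq, Multiset.countP_map]
    simp [hp, Finset.card, he]
  have hneg : negCount B = q := by
    unfold negCount eigAsc
    rw [dif_pos hB, ← Multiset.coe_countP, Multiset.sort_eq, Multiset.countP_map]
    simp [hq, Finset.card, he]
  have hnz : (Finset.univ.filter (fun i => e i ≠ 0)).card = 2 * k := by
    rw [← hpq2, hp, hq, ← Finset.card_union_of_disjoint]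
    · congr 1
      ext i
      simp only [Finset.mem_filter, Finset.mem_univ, true_and, Finset.mem_union]
      exact ⟨fun h => (lt_or_gt_of_ne h).symm, fun h => h.elim ne_of_gt ne_of_lt⟩
    · rw [Finset.disjoint_filter]
      intro i _ h; exact not_lt.2 h.le
  have hle : 2 * k ≤ N := by
    rw [← hnz]; exact (Finset.card_le_univ _).trans (by simp)
  refine ⟨⟨hle, hsym, h1, ?_⟩, hpos.trans hpk, hneg.trans hqk⟩
  unfold singval singAsc
  rw [dif_pos hB]
  refine Multiset.sort_getD_of_two_values hc0 (by omega) ?_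
  have hz : (Finset.univ.filter (fun i => ¬ e i ≠ 0)).card = N - 2 * k := by
    have := Finset.card_filter_add_card_filter_not (s := Finset.univ) (fun i => e i ≠ 0)
    rw [hnz, Finset.card_univ, Fintype.card_fin] at this
    omega
  have hsplit := Multiset.filter_add_not (fun i => ¬ e i ≠ 0) (Finset.univ : Finset (Fin N)).val
  rw [← hsplit, Multiset.map_add]
  congr 1
  · rw [Multiset.eq_replicate]
    refine ⟨by rw [Multiset.card_map]; exact hz, ?_⟩
    intro b hb
    obtain ⟨i, hi, rfl⟩ := Multiset.mem_map.1 hb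
    have := (Multiset.mem_filter.1 hi).2
    rw [not_not] at this
    change |e i| = 0
    rw [this, abs_zero]
  · rw [Multiset.eq_replicate]
    refine ⟨by rw [Multiset.card_map, ← hnz]; simp only [not_not]; rfl, ?_⟩
    intro b hb
    obtain ⟨i, hi, rfl⟩ := Multiset.mem_map.1 hb
    have := (Multiset.mem_filter.1 hi).2
    rw [not_not] at this
    change |e i| = c
    rcases hev i with h | h | h
    · exact absurd h this
    · rw [h, abs_of_pos hc0]
    · rw [h, abs_neg, abs_of_pos hc0]

/-! ### The Kronecker product construction -/

/-- A symmetric `±1` matrix with zero row sums, the Kronecker product of `!![1, 1; 1, -1]` and `!![1, -1; -1, 1]`; its eigenvalues are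
`2√2`, `-2√2`, `0`, `0`. -/
def zeroSumHadamard : Matrix (Fin 4) (Fin 4) ℝ :=
  !![1, -1, 1, -1; -1, 1, -1, 1; 1, -1, -1, 1; -1, 1, 1, -1]

lemma zeroSumHadamard_cube :
    zeroSumHadamard * zeroSumHadamard * zeroSumHadamard = (8 : ℝ) • zeroSumHadamard := by
  ext i j
  fin_cases i <;> fin_cases j <;>
    simp [zeroSumHadamard, Matrix.mul_apply, Fin.sum_univ_four] <;> norm_num

theorem stmt7 (k : ℕ) (hk : 1 ≤ k) {m : ℕ} (A : Matrix (Fin m) (Fin m) ℝ)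
    (hA : memS k A) :
    ∃ N : ℕ, ∃ B : Matrix (Fin N) (Fin N) ℝ, memS (2 * k) B ∧
      posCount B = k ∧ negCount B = k ∧ (∀ i, ∑ j, B i j = 0) := by
  have hcube := memS_cube hk hA
  obtain ⟨hkm, hsym, h1, -⟩ := hA
  have hH1 : ∀ i j, zeroSumHadamard i j = 1 ∨ zeroSumHadamard i j = -1 := by
    intro i j
    fin_cases i <;> fin_cases j <;> simp [zeroSumHadamard]
  have hHsym : ∀ i j, zeroSumHadamard i j = zeroSumHadamard j i := by
    intro i j
    fin_cases i <;> fin_cases j <;> simp [zeroSumHadamard]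
  have hHrow : ∀ i, ∑ j, zeroSumHadamard i j = 0 := by
    intro i
    fin_cases i <;> simp [zeroSumHadamard, Fin.sum_univ_four]
  have hHtr : zeroSumHadamard.trace = 0 := by
    simp [Matrix.trace, zeroSumHadamard, Fin.sum_univ_four]
  let f : Fin (m * 4) ≃ Fin m × Fin 4 := finProdFinEquiv.symm
  let B : Matrix (Fin (m * 4)) (Fin (m * 4)) ℝ := (A ⊗ₖ zeroSumHadamard).submatrix f f
  have hB : ∀ i j, B i j = A (f i).1 (f j).1 * zeroSumHadamard (f i).2 (f j).2 := fun i j => rfl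
  have hBsym : B.IsSymm := by
    ext i j
    rw [transpose_apply, hB, hB, hHsym, hsym.apply]
  have hB1 : ∀ i j, B i j = 1 ∨ B i j = -1 := by
    intro i j
    rw [hB]
    rcases h1 (f i).1 (f j).1 with h | h <;>
      rcases hH1 (f i).2 (f j).2 with h' | h' <;> rw [h, h'] <;> norm_num
  have hBtr : B.trace = 0 := by
    have : B.trace = (A ⊗ₖ zeroSumHadamard).trace :=
      Equiv.sum_comp f (fun x => (A ⊗ₖ zeroSumHadamard) x x)
    rw [this, trace_kronecker, hHtr, mul_zero]
  have hBcube : B * B * B = (((m * 4 : ℕ) : ℝ) ^ 2 / (2 * k : ℕ)) • B := by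
    simp only [B, submatrix_mul_equiv, ← mul_kronecker_mul, hcube, zeroSumHadamard_cube,
      smul_kronecker, kronecker_smul, smul_smul]
    rw [submatrix_smul]
    simp only [Pi.smul_apply]
    congr 1
    push_cast
    have : (k : ℝ) ≠ 0 := by positivity
    field_simp
    ring
  obtain ⟨hS, hp, hq⟩ := memS_of_cube hk (by omega) hBsym hB1 hBtr hBcube
  refine ⟨m * 4, B, hS, hp, hq, fun i => ?_⟩
  have : ∑ j, B i j = ∑ x : Fin m × Fin 4, A (f i).1 x.1 * zeroSumHadamard (f i).2 x.2 :=
    Equiv.sum_comp f (fun x => A (f i).1 x.1 * zeroSumHadamard (f i).2 x.2)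
  rw [this, Fintype.sum_prod_type]
  simp only [← Finset.mul_sum, hHrow, mul_zero, Finset.sum_const_zero]
end

section
/- For every integer s ≥ 1 there exists an integer n > s such that for every integer t ≥ 1 there is a finite simple graph G of order snt with λ_{s²+1}*(G) = nt/2. -/
/-!
Let `r_i` be the Rademacher functions on the cube `{0,1}^s`, put `n = 2 ^ s`, and let `C_i` be
the rank-one `±1` matrix `r_i r_iᵀ`. Orthogonality gives `C_i C_j = 0` for `i ≠ j` and
`C_i² = n C_i`, and `C_i 1 = 0`. Arrange the `C_i` along the symmetric Latin square `(a, b) ↦ a + b`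
of `ZMod s` and blow every entry up to a `t × t` block: this gives a symmetric `±1` matrix `B` with
unit diagonal, zero row sums and `B³ = (nt)² B`, hence with exactly `s²` nonzero singular values,
all equal to `nt`. The matrix `A = (J - B) / 2` is the adjacency matrix of a graph of order `snt`,
and its nonzero singular values are `snt / 2`, once, and `M = nt / 2`, `s²` times.

Formally, `J² = snt J`, `JB = BJ = 0` and the relation for `B` give a polynomial identity for `A`
confining its singular values to `{0, M, sM}` (`powers_of_relations`), and the traces of `A²` and
`A⁴` then determine the multiplicities (`singval_of_relations`).
-/


open Matrix BigOperators

/-! ### Rademacher functions -/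

/-- The `i`-th Rademacher function on the cube `ι → Bool`, with values `±1`. -/
def rad {ι : Type*} (i : ι) (x : ι → Bool) : ℝ := if x i then 1 else -1

lemma rad_mul_self {ι : Type*} (i : ι) (x : ι → Bool) : rad i x * rad i x = 1 := by
  unfold rad; split_ifs <;> norm_num

/-- A function on the cube that is odd in one coordinate sums to zero. -/
lemma sum_cube_eq_zero {ι : Type*} [Fintype ι] [DecidableEq ι] (i : ι) (f : (ι → Bool) → ℝ)
    (hf : ∀ x, f (Function.update x i (!x i)) = -f x) : ∑ x, f x = 0 := by
  have hinv : Function.Involutive (fun x : ι → Bool => Function.update x i (!x i)) := by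
    intro x; simp
  have h := Equiv.sum_comp hinv.toPerm f
  simp only [Function.Involutive.coe_toPerm, hf, Finset.sum_neg_distrib] at h
  linarith

lemma sum_rad {ι : Type*} [Fintype ι] [DecidableEq ι] (i : ι) :
    ∑ x : ι → Bool, rad i x = 0 := by
  refine sum_cube_eq_zero i _ fun x => ?_
  cases h : x i <;> simp [rad, h]

lemma sum_rad_mul_rad {ι : Type*} [Fintype ι] [DecidableEq ι] (i j : ι) :
    ∑ x : ι → Bool, rad i x * rad j x = if i = j then (2 : ℝ) ^ Fintype.card ι else 0 := by
  split_ifs with h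
  · subst h
    simp [rad_mul_self]
  · refine sum_cube_eq_zero i _ fun x => ?_
    have hj : rad j (Function.update x i (!x i)) = rad j x := by
      simp [rad, Function.update_of_ne (Ne.symm h)]
    have hi : rad i (Function.update x i (!x i)) = -rad i x := by
      cases h' : x i <;> simp [rad, h']
    rw [hj, hi, neg_mul]

/-! ### The graph and its matrices -/

/-- The vertex set: a class in `ZMod s`, a point of the cube, and one of `t` copies. -/
abbrev Vert (s t : ℕ) : Type := ZMod s × (ZMod s → Bool) × Fin t

/-- The graph in which `(a, x, u)` and `(b, y, v)` are adjacent when `x` and `y` differ in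
coordinate `a + b`. -/
def rgraph (s t : ℕ) : SimpleGraph (Vert s t) where
  Adj p q := p.2.1 (p.1 + q.1) ≠ q.2.1 (p.1 + q.1)
  symm := ⟨fun p q h => by rw [add_comm]; exact h.symm⟩
  loopless := ⟨fun p h => h rfl⟩

/-- The `±1` matrix `B = J - 2A` of `rgraph s t`: its `(a, b)` block is the rank-one matrix
of the Rademacher function of index `a + b`, each entry repeated as a `t × t` block. -/
def bmat (s t : ℕ) : Matrix (Vert s t) (Vert s t) ℝ :=
  Matrix.of fun p q => rad (p.1 + q.1) p.2.1 * rad (p.1 + q.1) q.2.1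

/-- The all-ones matrix. -/
def jmat (s t : ℕ) : Matrix (Vert s t) (Vert s t) ℝ := Matrix.of fun _ _ => 1

lemma bmat_transpose (s t : ℕ) : (bmat s t)ᵀ = bmat s t := by
  ext p q
  simp only [bmat, Matrix.transpose_apply, Matrix.of_apply, add_comm q.1 p.1]
  ring

section algebra

variable (s t : ℕ) [NeZero s]

lemma jmat_mul_bmat : jmat s t * bmat s t = 0 := by
  ext p q
  simp only [jmat, bmat, Matrix.mul_apply, Matrix.of_apply, Fintype.sum_prod_type, one_mul,
    Finset.sum_const, Matrix.zero_apply, ← Finset.smul_sum, ← Finset.sum_mul, sum_rad,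
    zero_mul, smul_zero]

lemma bmat_mul_jmat : bmat s t * jmat s t = 0 := by
  have h := congrArg Matrix.transpose (jmat_mul_bmat s t)
  rw [Matrix.transpose_mul, bmat_transpose, Matrix.transpose_zero] at h
  exact h

lemma jmat_mul_jmat : jmat s t * jmat s t = ((s : ℝ) * (2 ^ s * t)) • jmat s t := by
  ext p q
  simp [jmat, Matrix.mul_apply, ZMod.card]

lemma trace_jmat : (jmat s t).trace = (s : ℝ) * (2 ^ s * t) := by
  simp [jmat, Matrix.trace, ZMod.card]

/-- `B²` is block diagonal, since `a + b = b + c` only for `a = c`. -/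
lemma bmat_sq : bmat s t * bmat s t = Matrix.of fun p q =>
    if p.1 = q.1 then ((2 : ℝ) ^ s * t) * ∑ i, rad i p.2.1 * rad i q.2.1 else 0 := by
  ext ⟨a, x, u⟩ ⟨c, z, w⟩
  simp only [bmat, Matrix.mul_apply, Matrix.of_apply, Fintype.sum_prod_type, Finset.sum_const,
    Finset.card_univ, Fintype.card_fin, ← Finset.smul_sum]
  have h1 : ∀ b : ZMod s, ∑ y : ZMod s → Bool,
      rad (a + b) x * rad (a + b) y * (rad (b + c) y * rad (b + c) z)
      = if a = c then (2 : ℝ) ^ s * (rad (a + b) x * rad (a + b) z) else 0 := by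
    intro b
    have h2 : ∀ y : ZMod s → Bool,
        rad (a + b) x * rad (a + b) y * (rad (b + c) y * rad (b + c) z)
        = rad (a + b) x * rad (b + c) z * (rad (a + b) y * rad (b + c) y) := fun y => by ring
    simp only [h2, ← Finset.mul_sum, sum_rad_mul_rad, ZMod.card]
    have h3 : a + b = b + c ↔ a = c := by rw [add_comm b c]; exact add_left_inj b
    simp only [h3]
    split_ifs with h
    · subst h
      rw [add_comm b a]; ring
    · simp
  simp only [h1]
  split_ifs with h
  · rw [← Finset.mul_sum, ← Equiv.sum_comp (Equiv.addLeft a) (fun i => rad i x * rad i z)]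
    simp only [Equiv.coe_addLeft, nsmul_eq_mul]
    ring
  · simp

lemma bmat_cube : bmat s t * bmat s t * bmat s t = ((2 : ℝ) ^ s * t) ^ 2 • bmat s t := by
  rw [bmat_sq]
  ext ⟨a, x, u⟩ ⟨c, z, w⟩
  simp only [bmat, Matrix.mul_apply, Matrix.of_apply, Fintype.sum_prod_type, Finset.sum_const,
    Finset.card_univ, Fintype.card_fin, ← Finset.smul_sum, Matrix.smul_apply, ite_mul, zero_mul]
  rw [Finset.sum_eq_single a (fun b _ hb => by simp [Ne.symm hb]) (by simp)]
  simp only [if_true]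
  have h1 : ∀ y : ZMod s → Bool, (2 : ℝ) ^ s * t * (∑ i, rad i x * rad i y)
      * (rad (a + c) y * rad (a + c) z)
      = ∑ i, 2 ^ s * t * rad i x * rad (a + c) z * (rad i y * rad (a + c) y) := by
    intro y
    rw [Finset.mul_sum, Finset.sum_mul]
    exact Finset.sum_congr rfl fun i _ => by ring
  simp only [h1]
  rw [Finset.sum_comm]
  simp only [← Finset.mul_sum, sum_rad_mul_rad, ZMod.card, mul_ite, mul_zero,
    Finset.sum_ite_eq', Finset.mem_univ, if_true, nsmul_eq_mul, smul_eq_mul]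
  ring

lemma trace_bmat_sq : (bmat s t * bmat s t).trace = ((s : ℝ) * (2 ^ s * t)) ^ 2 := by
  rw [bmat_sq]
  simp [Matrix.trace, rad_mul_self, ZMod.card]
  ring

end algebra

/-- Entrywise, the adjacency matrix is `(J - B) / 2`. -/
lemma rgraph_adjMatrix (s t : ℕ) [DecidableRel (rgraph s t).Adj] :
    (rgraph s t).adjMatrix ℝ = (1 / 2 : ℝ) • (jmat s t - bmat s t) := by
  ext p q
  have hadj : (rgraph s t).Adj p q ↔ p.2.1 (p.1 + q.1) ≠ q.2.1 (p.1 + q.1) := Iff.rfl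
  simp only [SimpleGraph.adjMatrix_apply, hadj, Matrix.smul_apply, Matrix.sub_apply, jmat,
    bmat, Matrix.of_apply, rad, smul_eq_mul]
  cases p.2.1 (p.1 + q.1) <;> cases q.2.1 (p.1 + q.1) <;> norm_num

/-- The relations satisfied by `A = (J - B) / 2` when `J² = 2sM J`, `JB = BJ = 0` and
`B³ = 4M² B`. -/
lemma powers_of_relations {V : Type*} [Fintype V] [DecidableEq V] (J B A : Matrix V V ℝ)
    (S M : ℝ) (hA : A = (1 / 2 : ℝ) • (J - B))
    (hJJ : J * J = (S * (2 * M)) • J) (hJB : J * B = 0) (hBJ : B * J = 0)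
    (hBBB : B * B * B = (2 * M) ^ 2 • B) (htJ : J.trace = S * (2 * M))
    (htB : (B * B).trace = (S * (2 * M)) ^ 2) :
    A ^ 6 = ((1 + S ^ 2) * M ^ 2) • A ^ 4 - (S ^ 2 * M ^ 4) • A ^ 2 ∧
    (A ^ 2).trace = 2 * S ^ 2 * M ^ 2 ∧ (A ^ 4).trace = (S ^ 4 + S ^ 2) * M ^ 4 := by
  have h2 : A ^ 2 = (S * M / 2) • J + (1 / 4 : ℝ) • (B * B) := by
    rw [pow_two, hA]
    simp only [smul_mul_assoc, mul_smul_comm, sub_mul, mul_sub, hJJ, hJB, hBJ]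
    module
  have hJBB : J * (B * B) = 0 := by rw [← mul_assoc, hJB, zero_mul]
  have hBBJ : B * B * J = 0 := by rw [mul_assoc, hBJ, mul_zero]
  have hB4 : B * B * (B * B) = (2 * M) ^ 2 • (B * B) := by
    rw [← mul_assoc, hBBB, smul_mul_assoc]
  have h4 : A ^ 4 = (S ^ 3 * M ^ 3 / 2) • J + (M ^ 2 / 4) • (B * B) := by
    rw [show A ^ 4 = A ^ 2 * A ^ 2 by rw [← pow_add], h2]
    simp only [smul_mul_assoc, mul_smul_comm, add_mul, mul_add, hJJ, hJBB, hBBJ, hB4]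
    module
  have h6 : A ^ 6 = (S ^ 5 * M ^ 5 / 2) • J + (M ^ 4 / 4) • (B * B) := by
    rw [show A ^ 6 = A ^ 4 * A ^ 2 by rw [← pow_add], h2, h4]
    simp only [smul_mul_assoc, mul_smul_comm, add_mul, mul_add, hJJ, hJBB, hBBJ, hB4]
    module
  refine ⟨?_, ?_, ?_⟩
  · rw [h6, h4, h2]
    module
  · rw [h2, Matrix.trace_add, Matrix.trace_smul, Matrix.trace_smul, htJ, htB, smul_eq_mul,
      smul_eq_mul]
    ring
  · rw [h4, Matrix.trace_add, Matrix.trace_smul, Matrix.trace_smul, htJ, htB, smul_eq_mul,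
      smul_eq_mul]
    ring

/-! ### Reading singular values off from traces -/

/-- In a sorted list, the entry at position `k` is `M` once at most `k` entries are below `M`
and more than `k` entries are at most `M`. -/
lemma sorted_getD_eq (L : List ℝ) (hL : L.Pairwise (· ≤ ·)) (k : ℕ) (M : ℝ)
    (h1 : L.countP (fun x => decide (x < M)) ≤ k)
    (h2 : k < L.countP (fun x => decide (x ≤ M))) : L.getD k 0 = M := by
  have hk : k < L.length := h2.trans_le List.countP_le_length
  rw [List.getD_eq_getElem _ _ hk]
  have hmono : ∀ i j (hi : i < L.length) (hj : j < L.length), i ≤ j → L[i] ≤ L[j] := by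
    intro i j hi hj hij
    rcases hij.eq_or_lt with h | h
    · subst h; exact le_rfl
    · exact List.pairwise_iff_getElem.mp hL i j hi hj h
  apply le_antisymm
  · by_contra! hlt
    have hdrop : (L.drop k).countP (fun x => decide (x ≤ M)) = 0 := by
      rw [List.countP_eq_zero]
      intro x hx
      obtain ⟨i, hi, rfl⟩ := List.mem_iff_getElem.mp hx
      rw [List.getElem_drop]
      have := hmono k (k + i) hk (by rw [List.length_drop] at hi; omega) (by omega)
      simp only [decide_eq_true_eq, not_le]
      exact hlt.trans_le this
    rw [← List.take_append_drop k L, List.countP_append, hdrop] at h2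
    have h3 : (L.take k).countP (fun x => decide (x ≤ M)) ≤ (L.take k).length :=
      List.countP_le_length
    rw [List.length_take] at h3
    omega
  · by_contra! hlt
    have htake : (L.take (k + 1)).countP (fun x => decide (x < M)) = (L.take (k + 1)).length := by
      rw [List.countP_eq_length]
      intro x hx
      obtain ⟨i, hi, rfl⟩ := List.mem_iff_getElem.mp hx
      rw [List.getElem_take]
      rw [List.length_take] at hi
      have := hmono i k (by omega) hk (by omega)
      simp only [decide_eq_true_eq]
      exact this.trans_lt hlt
    rw [← List.take_append_drop (k + 1) L, List.countP_append, htake, List.length_take] at h1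
    omega

lemma trace_pow_eq_sum {N : ℕ} {A : Matrix (Fin N) (Fin N) ℝ} (hA : A.IsHermitian) (k : ℕ) :
    (A ^ k).trace = ∑ i, hA.eigenvalues i ^ k := by
  conv_lhs => rw [hA.spectral_theorem, ← map_pow, Unitary.conjStarAlgAut_apply,
    Matrix.trace_mul_cycle, Unitary.coe_star_mul_self, one_mul, Matrix.diagonal_pow]
  simp [Matrix.trace_diagonal]

lemma pow_mulVec_eigenvector {N : ℕ} {A : Matrix (Fin N) (Fin N) ℝ} (hA : A.IsHermitian)
    (i : Fin N) (k : ℕ) : (A ^ k) *ᵥ (hA.eigenvectorBasis i).ofLp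
      = hA.eigenvalues i ^ k • (hA.eigenvectorBasis i).ofLp := by
  induction k with
  | zero => simp
  | succ k ih =>
    rw [pow_succ, ← Matrix.mulVec_mulVec, hA.mulVec_eigenvectorBasis, Matrix.mulVec_smul, ih,
      smul_smul, pow_succ, mul_comm]

/-- The identities make the nonzero singular values one `sM` and `s²` copies of `M`
(merging into two copies of `M` when `s = 1`), by counting with the traces. -/
lemma singval_of_relations {N : ℕ} (A : Matrix (Fin N) (Fin N) ℝ) (hA : A.IsHermitian)
    (s : ℕ) (hs : 1 ≤ s) (M : ℝ) (hM : 0 < M)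
    (h6 : A ^ 6 = ((1 + (s : ℝ) ^ 2) * M ^ 2) • A ^ 4 - ((s : ℝ) ^ 2 * M ^ 4) • A ^ 2)
    (ht2 : (A ^ 2).trace = 2 * (s : ℝ) ^ 2 * M ^ 2)
    (ht4 : (A ^ 4).trace = ((s : ℝ) ^ 4 + (s : ℝ) ^ 2) * M ^ 4) :
    singval A (s ^ 2 + 1) = M := by
  have hsR : (1 : ℝ) ≤ s := by exact_mod_cast hs
  have hval : ∀ i, hA.eigenvalues i = 0 ∨ |hA.eigenvalues i| = M ∨
      |hA.eigenvalues i| = s * M := by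
    intro i
    set l := hA.eigenvalues i with hl
    have hv : (hA.eigenvectorBasis i).ofLp ≠ 0 := by
      intro h
      apply hA.eigenvectorBasis.orthonormal.ne_zero i
      ext j
      exact congrFun h j
    have h := congrArg (· *ᵥ (hA.eigenvectorBasis i).ofLp) h6
    simp only [Matrix.sub_mulVec, Matrix.smul_mulVec, pow_mulVec_eigenvector, smul_smul,
      ← sub_smul] at h
    have h' := smul_left_injective ℝ hv h
    rw [← hl] at h'
    have hf : l ^ 2 * ((l ^ 2 - M ^ 2) * (l ^ 2 - (s * M) ^ 2)) = 0 := by linear_combination h'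
    rcases mul_eq_zero.mp hf with h0 | h0
    · left; exact pow_eq_zero_iff (two_ne_zero) |>.mp h0
    · right
      rcases mul_eq_zero.mp h0 with h0 | h0
      · left
        rw [← abs_of_pos hM]; exact sq_eq_sq_iff_abs_eq_abs _ _ |>.mp (sub_eq_zero.mp h0)
      · right
        rw [← abs_of_pos (show 0 < s * M by positivity)]
        exact sq_eq_sq_iff_abs_eq_abs _ _ |>.mp (sub_eq_zero.mp h0)
  -- `p` counts the nonzero eigenvalues, `q` those of absolute value above `M`
  set p := (Finset.univ.filter fun i => ¬ |hA.eigenvalues i| < M).card with hp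
  set q := (Finset.univ.filter fun i => ¬ |hA.eigenvalues i| ≤ M).card with hq
  have key : ∀ i, (hA.eigenvalues i ^ 2 = M ^ 2 * (if ¬ |hA.eigenvalues i| < M then 1 else 0)
      + (s ^ 2 - 1) * M ^ 2 * (if ¬ |hA.eigenvalues i| ≤ M then 1 else 0)) ∧
      (hA.eigenvalues i ^ 4 = M ^ 4 * (if ¬ |hA.eigenvalues i| < M then 1 else 0)
      + (s ^ 4 - 1) * M ^ 4 * (if ¬ |hA.eigenvalues i| ≤ M then 1 else 0)) := by
    intro i
    have e4 : hA.eigenvalues i ^ 4 = |hA.eigenvalues i| ^ 4 := by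
      rw [show (4 : ℕ) = 2 * 2 from rfl, pow_mul, pow_mul, sq_abs]
    rw [← sq_abs, e4]
    rcases hval i with h | h | h
    · simp [h, hM, hM.le]
    · simp [h]
    · rw [h]
      rcases hsR.eq_or_lt with h1 | h1
      · simp [← h1]
      · have h2 : M < s * M := by nlinarith
        simp only [not_lt, h2.le, not_le, h2, if_true]
        constructor <;> ring
  have e2 : M ^ 2 * p + (s ^ 2 - 1) * M ^ 2 * q = 2 * (s : ℝ) ^ 2 * M ^ 2 := by
    rw [← ht2, trace_pow_eq_sum hA, Finset.sum_congr rfl fun i _ => (key i).1,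
      Finset.sum_add_distrib, ← Finset.mul_sum, ← Finset.mul_sum, Finset.sum_boole,
      Finset.sum_boole]
  have e4 : M ^ 4 * p + (s ^ 4 - 1) * M ^ 4 * q = ((s : ℝ) ^ 4 + (s : ℝ) ^ 2) * M ^ 4 := by
    rw [← ht4, trace_pow_eq_sum hA, Finset.sum_congr rfl fun i _ => (key i).2,
      Finset.sum_add_distrib, ← Finset.mul_sum, ← Finset.mul_sum, Finset.sum_boole,
      Finset.sum_boole]
  have e2' : (p : ℝ) + (s ^ 2 - 1) * q = 2 * s ^ 2 := by
    have : M ^ 2 ≠ 0 := by positivity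
    apply mul_left_cancel₀ this; linear_combination e2
  have e4' : (p : ℝ) + (s ^ 4 - 1) * q = s ^ 4 + s ^ 2 := by
    have : M ^ 4 ≠ 0 := by positivity
    apply mul_left_cancel₀ this; linear_combination e4
  have hpq : p = s ^ 2 + 1 ∧ q ≤ s ^ 2 := by
    rcases hs.eq_or_lt with h1 | h1
    · subst h1
      have hq0 : q = 0 := by
        rw [hq, Finset.card_eq_zero, Finset.filter_eq_empty_iff]
        intro i _
        rcases hval i with h | h | h <;> simp [h, hM.le]
      constructor
      · have : (p : ℝ) = 2 := by push_cast at e2'; linarith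
        exact_mod_cast this
      · omega
    · have hs1 : (1 : ℝ) < s := by exact_mod_cast h1
      have hne : (s : ℝ) ^ 4 - s ^ 2 ≠ 0 := by
        have : (s : ℝ) ^ 4 - s ^ 2 = s ^ 2 * (s - 1) * (s + 1) := by ring
        rw [this]
        have : (0 : ℝ) < s - 1 := by linarith
        positivity
      have hq1 : (q : ℝ) = 1 := by
        apply mul_left_cancel₀ hne; linear_combination e4' - e2'
      have hp1 : (p : ℝ) = s ^ 2 + 1 := by rw [hq1] at e2'; linarith
      constructor
      · exact_mod_cast hp1
      · have : q = 1 := by exact_mod_cast hq1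
        rw [this]; exact Nat.one_le_pow _ _ hs
  have hp' := Finset.card_filter_add_card_filter_not (s := (Finset.univ : Finset (Fin N)))
    (fun i => |hA.eigenvalues i| < M)
  have hq' := Finset.card_filter_add_card_filter_not (s := (Finset.univ : Finset (Fin N)))
    (fun i => |hA.eigenvalues i| ≤ M)
  rw [Finset.card_univ, Fintype.card_fin] at hp' hq'
  have hcount : ∀ P : ℝ → Prop, ∀ [DecidablePred P], (singAsc A).countP (fun x => decide (P x))
      = (Finset.univ.filter fun i => P |hA.eigenvalues i|).card := by
    intro P _
    rw [singAsc, dif_pos hA, ← Multiset.coe_countP, Multiset.sort_eq, Multiset.countP_map]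
    rfl
  unfold singval
  apply sorted_getD_eq
  · rw [singAsc, dif_pos hA]
    exact Multiset.pairwise_sort _ _
  · rw [hcount (fun x => x < M)]
    omega
  · rw [hcount (fun x => x ≤ M)]
    omega

/-! ### The extremal graph on `Fin (s * 2 ^ s * t)` -/

theorem stmt13 (s : ℕ) (hs : 1 ≤ s) :
    ∃ n : ℕ, s < n ∧ ∀ t : ℕ, 1 ≤ t →
      ∃ G : SimpleGraph (Fin (s * n * t)),
        graphSing G (s ^ 2 + 1) = (n : ℝ) * t / 2 := by
  classical
  have : NeZero s := ⟨by omega⟩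
  refine ⟨2 ^ s, Nat.lt_two_pow_self, fun t ht => ?_⟩
  have hcard : Fintype.card (Vert s t) = s * 2 ^ s * t := by
    simp [ZMod.card, mul_assoc]
  let e : Vert s t ≃ Fin (s * 2 ^ s * t) := Fintype.equivFinOfCardEq hcard
  refine ⟨(rgraph s t).comap e.symm, ?_⟩
  have htR : (0 : ℝ) < t := by exact_mod_cast ht
  set M : ℝ := 2 ^ s * t / 2 with hM
  have h2M : (2 : ℝ) ^ s * t = 2 * M := by rw [hM]; ring
  obtain ⟨r6, r2, r4⟩ := powers_of_relations (jmat s t) (bmat s t) ((rgraph s t).adjMatrix ℝ)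
    s M (rgraph_adjMatrix s t) (by rw [jmat_mul_jmat, h2M]) (jmat_mul_bmat s t)
    (bmat_mul_jmat s t) (by rw [bmat_cube, h2M]) (by rw [trace_jmat, h2M])
    (by rw [trace_bmat_sq, h2M])
  have hadj : ∀ _ : DecidableRel ((rgraph s t).comap e.symm).Adj,
      ((rgraph s t).comap e.symm).adjMatrix ℝ =
      Matrix.reindexAlgEquiv ℝ ℝ e ((rgraph s t).adjMatrix ℝ) := by
    intro _
    ext i j
    simp [SimpleGraph.adjMatrix_apply]
  have htr : ∀ X : Matrix (Vert s t) (Vert s t) ℝ,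
      (Matrix.reindexAlgEquiv ℝ ℝ e X).trace = X.trace := by
    intro X
    simp only [Matrix.trace, Matrix.diag_apply, Matrix.coe_reindexAlgEquiv,
      Matrix.reindex_apply, Matrix.submatrix_apply]
    exact Equiv.sum_comp e.symm fun p => X p p
  unfold graphSing
  push_cast
  rw [← hM]
  apply singval_of_relations _ _ s hs M (by positivity)
  · rw [hadj _, ← map_pow, ← map_pow, ← map_pow, r6, map_sub, map_smul, map_smul]
  · rw [hadj _, ← map_pow, htr, r2]
  · rw [hadj _, ← map_pow, htr, r4]
  · rw [Matrix.IsHermitian, Matrix.conjTranspose_eq_transpose_of_trivial]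
    exact SimpleGraph.transpose_adjMatrix _
end

section
/- For any integer k ≥ 3, one has 1/(2√(k−1)) ≥ c_k* > 1/(2√(k−1) + 2). -/
/-! For the upper bound, let `e` be the sum of the entries of the adjacency matrix. The squares of
its eigenvalues sum to `e`, and the Rayleigh quotient at the all-ones vector shows that some
eigenvalue is at least `e / n`. Setting that one aside, at least `k - 1` further eigenvalues have
absolute value at least `s = λ_k*`, so `(k - 1) s² ≤ e - (e / n)² ≤ n² / 4`.

For the lower bound, a variant of Kharaghani's block construction is used. Let `h_a`, `a ∈ ℤ/q`, be
pairwise orthogonal `±1` vectors of length `N`, all orthogonal to the all-ones vector, and let `K`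
be the symmetric matrix of order `q N` with block `h_{i+j} h_{i+j}ᵀ` in position `(i, j)`. Write
`h_{i,a}` for the vector equal to `h_a` on block `i` and to zero elsewhere. Then
`K h_{i,a} = N h_{a-i,a}`, and `K` kills the all-ones vector. So the `0-1` matrix `(J + K) / 2` acts
on the span of the `q²` vectors `h_{i,a}` and the all-ones vector, and stretches it by at least
`N / 2`. Its diagonal is constantly `1`, so removing the diagonal subtracts the identity and leaves
the adjacency matrix of a graph with `q² + 1` singular values at least `N / 2 - 1`
(`exists_graph_le_graphSing`). With `q = ⌈√(k - 1)⌉` one has `k ≤ q² + 1`, and letting `N` grow gives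
`c_k* ≥ 1 / (2 q) > 1 / (2 √(k - 1) + 2)`, because `q < √(k - 1) + 1`. Coordinate functions on
`{±1}^m` provide the vectors `h_a`. -/


open Matrix BigOperators

/-- `cStar k` is the supremum of `λ_k^*(G)/n` over all graphs `G` of order `n ≥ k`. -/
noncomputable def cStar (k : ℕ) : ℝ :=
  sSup { x : ℝ | ∃ n : ℕ, k ≤ n ∧ ∃ G : SimpleGraph (Fin n), x = graphSing G k / n }

/-! ### Sorted lists and the counting form of the `k`-th singular value -/

theorem le_getD_iff_countP (L : List ℝ) (hL : L.Pairwise (· ≤ ·)) (c : ℝ) (j : ℕ)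
    (hj : j < L.length) :
    c ≤ L.getD j 0 ↔ L.length - j ≤ L.countP (fun x => decide (c ≤ x)) := by
  classical
  rw [List.getD_eq_getElem _ _ hj]
  constructor
  · intro h
    have h1 : (L.drop j).countP (fun x => decide (c ≤ x)) = (L.drop j).length := by
      rw [List.countP_eq_length]
      intro x hx
      obtain ⟨i, hi, rfl⟩ := List.mem_iff_getElem.1 hx
      simp only [List.getElem_drop, decide_eq_true_eq]
      refine h.trans ?_
      rcases Nat.eq_zero_or_pos i with rfl | h0
      · simp
      · exact List.pairwise_iff_getElem.1 hL _ _ _ _ (by omega)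
    have h2 := (List.drop_sublist j L).countP_le (p := fun x => decide (c ≤ x))
    rw [h1, List.length_drop] at h2
    exact h2
  · intro h
    by_contra! hc
    have h1 : (L.take (j + 1)).countP (fun x => decide (c ≤ x)) = 0 := by
      rw [List.countP_eq_zero]
      intro x hx
      obtain ⟨i, hi, rfl⟩ := List.mem_iff_getElem.1 hx
      simp only [List.getElem_take, decide_eq_true_eq, not_le]
      refine lt_of_le_of_lt ?_ hc
      have hij : i ≤ j := by
        have := hi
        rw [List.length_take] at this
        omega
      rcases hij.eq_or_lt with rfl | h0
      · simp
      · exact List.pairwise_iff_getElem.1 hL _ _ _ _ h0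
    have h2 : L.countP (fun x => decide (c ≤ x)) ≤ L.length - (j + 1) := by
      conv_lhs => rw [← List.take_append_drop (j + 1) L]
      rw [List.countP_append, h1, zero_add]
      exact (List.countP_le_length).trans (by simp)
    omega

/-- The `k`-th singular value is at least `c` exactly when at least `k` eigenvalues have absolute
value at least `c`. -/
theorem le_singval_iff {n k : ℕ} (A : Matrix (Fin n) (Fin n) ℝ) (hA : A.IsHermitian)
    (hk : 1 ≤ k) (hkn : k ≤ n) (c : ℝ) :
    c ≤ singval A k ↔ k ≤ (Finset.univ.filter (fun i => c ≤ |hA.eigenvalues i|)).card := by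
  classical
  have hs : singAsc A = (Finset.univ.val.map (fun i => |hA.eigenvalues i|)).sort (· ≤ ·) := by
    unfold singAsc
    rw [dif_pos hA]
  have hlen : (singAsc A).length = n := by rw [hs]; simp
  have hcount : (singAsc A).countP (fun x => decide (c ≤ x))
      = (Finset.univ.filter (fun i => c ≤ |hA.eigenvalues i|)).card := by
    rw [← Multiset.coe_countP, hs, Multiset.sort_eq, Multiset.countP_map]
    rfl
  unfold singval
  rw [le_getD_iff_countP _ (by rw [hs]; exact Multiset.pairwise_sort _ _) c _ (by omega), hlen,
    hcount]
  have : n - (n - k) = k := by omega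
  rw [this]

/-! ### Coordinates in an eigenbasis -/

/-- The `i`-th coordinate of `v` in the orthonormal eigenbasis of `A`. -/
noncomputable def coef {n : ℕ} {A : Matrix (Fin n) (Fin n) ℝ} (hA : A.IsHermitian) (i : Fin n) :
    (Fin n → ℝ) →ₗ[ℝ] ℝ where
  toFun v := (hA.eigenvectorBasis i).ofLp ⬝ᵥ v
  map_add' v w := dotProduct_add _ _ _
  map_smul' c v := by simp

theorem sum_coef_mul {n : ℕ} {A : Matrix (Fin n) (Fin n) ℝ} (hA : A.IsHermitian)
    (v w : Fin n → ℝ) : ∑ i, coef hA i v * coef hA i w = v ⬝ᵥ w := by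
  have h := hA.eigenvectorBasis.sum_inner_mul_inner (WithLp.toLp 2 v) (WithLp.toLp 2 w)
  simp only [EuclideanSpace.inner_eq_star_dotProduct, star_trivial] at h
  rw [dotProduct_comm v w, ← h]
  refine Finset.sum_congr rfl fun i _ => ?_
  simp only [coef, LinearMap.coe_mk, AddHom.coe_mk]
  rw [dotProduct_comm _ w]

theorem coef_mulVec {n : ℕ} {A : Matrix (Fin n) (Fin n) ℝ} (hA : A.IsHermitian) (i : Fin n)
    (v : Fin n → ℝ) : coef hA i (A *ᵥ v) = hA.eigenvalues i * coef hA i v := by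
  simp only [coef, LinearMap.coe_mk, AddHom.coe_mk]
  have hT : Aᵀ = A := by simpa [Matrix.IsHermitian] using hA
  rw [dotProduct_mulVec, ← mulVec_transpose, hT, hA.mulVec_eigenvectorBasis, smul_dotProduct,
    smul_eq_mul]

theorem sum_sq_eigenvalues {n : ℕ} {A : Matrix (Fin n) (Fin n) ℝ} (hA : A.IsHermitian) :
    ∑ i, hA.eigenvalues i ^ 2 = ∑ q, ∑ p, A p q ^ 2 := by
  have h1 : ∀ q, ∑ p, A p q ^ 2
      = ∑ i, hA.eigenvalues i ^ 2 * ((hA.eigenvectorBasis i).ofLp q) ^ 2 := by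
    intro q
    have := sum_coef_mul hA (A *ᵥ Pi.single q 1) (A *ᵥ Pi.single q 1)
    simp only [coef_mulVec] at this
    rw [mulVec_single_one] at this
    have h2 : A.col q ⬝ᵥ A.col q = ∑ p, A p q ^ 2 := by
      simp [dotProduct, Matrix.col_apply, sq]
    rw [← h2, ← this]
    refine Finset.sum_congr rfl fun i _ => ?_
    simp only [coef, LinearMap.coe_mk, AddHom.coe_mk, dotProduct_single_one]
    ring
  simp only [h1]
  rw [Finset.sum_comm]
  refine Finset.sum_congr rfl fun i _ => ?_
  rw [← Finset.mul_sum]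
  have h3 : ∑ q, ((hA.eigenvectorBasis i).ofLp q) ^ 2 = 1 := by
    have := hA.eigenvectorBasis.orthonormal.1 i
    rw [← EuclideanSpace.real_norm_sq_eq, this, one_pow]
  rw [h3, mul_one]

/-- If `‖A v‖ ≥ s ‖v‖` on an injectively parametrised space of dimension `|B|`, then `A` has at
least `|B|` eigenvalues of absolute value at least `s`: otherwise some nonzero vector of the space
is orthogonal to all the corresponding eigenvectors. -/
theorem card_le_of_expanding {n : ℕ} {A : Matrix (Fin n) (Fin n) ℝ} (hA : A.IsHermitian)
    {B : Type*} [Fintype B] (φ : (B → ℝ) →ₗ[ℝ] (Fin n → ℝ)) (s : ℝ)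
    (hpos : ∀ c, c ≠ 0 → 0 < φ c ⬝ᵥ φ c)
    (hexp : ∀ c, s ^ 2 * (φ c ⬝ᵥ φ c) ≤ (A *ᵥ φ c) ⬝ᵥ (A *ᵥ φ c)) :
    Fintype.card B ≤ (Finset.univ.filter (fun i => s ≤ |hA.eigenvalues i|)).card := by
  classical
  by_contra! hlt
  set S := Finset.univ.filter (fun i => s ≤ |hA.eigenvalues i|) with hS
  let ψ : (B → ℝ) →ₗ[ℝ] (S → ℝ) := LinearMap.pi fun i => (coef hA i.1).comp φ
  have hker : LinearMap.ker ψ ≠ ⊥ := LinearMap.ker_ne_bot_of_finrank_lt (by simpa using hlt)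
  obtain ⟨c, hc, hc0⟩ := Submodule.exists_mem_ne_zero_of_ne_bot hker
  have hz : ∀ i ∈ S, coef hA i (φ c) = 0 := fun i hi => congrFun (LinearMap.mem_ker.1 hc) ⟨i, hi⟩
  have hp := hpos c hc0
  have he := hexp c
  rw [← sum_coef_mul hA] at hp
  rw [← sum_coef_mul hA, ← sum_coef_mul hA, Finset.mul_sum] at he
  obtain ⟨i0, -, hi0⟩ := Finset.exists_lt_of_sum_lt (s := Finset.univ)
    (f := fun _ : Fin n => (0 : ℝ)) (by simpa using hp)
  have key : ∀ i, i ∉ S → hA.eigenvalues i ^ 2 < s ^ 2 := by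
    intro i hi
    simp only [hS, Finset.mem_filter, Finset.mem_univ, true_and, not_le] at hi
    rw [← sq_abs]
    exact pow_lt_pow_left₀ hi (abs_nonneg _) two_ne_zero
  refine absurd he (not_le.2 (Finset.sum_lt_sum (fun i _ => ?_) ⟨i0, Finset.mem_univ _, ?_⟩))
  · rw [coef_mulVec]
    by_cases hi : i ∈ S
    · simp [hz i hi]
    · nlinarith [key i hi, mul_self_nonneg (coef hA i (φ c))]
  · rw [coef_mulVec]
    by_cases hi : i0 ∈ S
    · simp [hz i0 hi] at hi0
    · nlinarith [key i0 hi]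

/-! ### The upper bound -/

/-- With `e` the sum of all entries of the adjacency matrix, some eigenvalue is at least `e / n`,
and the squares of the eigenvalues sum to `e`. Hence `(k - 1) s² ≤ e - (e / n)² ≤ n² / 4`. -/
theorem graphSing_le {n k : ℕ} (hk : 2 ≤ k) (hkn : k ≤ n) (G : SimpleGraph (Fin n)) :
    graphSing G k / n ≤ 1 / (2 * Real.sqrt ((k : ℝ) - 1)) := by
  classical
  have hk1 : (1 : ℝ) ≤ (k : ℝ) - 1 := by
    have : (2 : ℝ) ≤ k := by exact_mod_cast hk
    linarith
  have hn : (0 : ℝ) < n := by exact_mod_cast (by omega : 0 < n)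
  set r := Real.sqrt ((k : ℝ) - 1) with hr
  have hr0 : 0 < r := Real.sqrt_pos.2 (by linarith)
  have hr2 : r ^ 2 = (k : ℝ) - 1 := Real.sq_sqrt (by linarith)
  unfold graphSing
  set A : Matrix (Fin n) (Fin n) ℝ := G.adjMatrix ℝ with hAdef
  have hA : A.IsHermitian := by
    rw [Matrix.IsHermitian, conjTranspose_eq_transpose_of_trivial]
    exact G.isSymm_adjMatrix
  set s := singval A k with hs
  rcases le_or_gt s 0 with hs0 | hs0
  · exact (div_nonpos_of_nonpos_of_nonneg hs0 hn.le).trans (by positivity)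
  have hcard := (le_singval_iff A hA (by omega) hkn s).1 hs.le
  set e : ℝ := ∑ q, ∑ p, A p q with he
  have he0 : 0 ≤ e := Finset.sum_nonneg fun q _ => Finset.sum_nonneg fun p _ => by
    simp only [hAdef, SimpleGraph.adjMatrix_apply]; split_ifs <;> norm_num
  have hsq : ∑ i, hA.eigenvalues i ^ 2 = e := by
    rw [sum_sq_eigenvalues hA]
    refine Finset.sum_congr rfl fun q _ => Finset.sum_congr rfl fun p _ => ?_
    simp only [hAdef, SimpleGraph.adjMatrix_apply]; split_ifs <;> norm_num
  have hone : ∑ i, coef hA i 1 * coef hA i 1 = n := by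
    rw [sum_coef_mul]; simp
  have hray : ∑ i, hA.eigenvalues i * (coef hA i 1 * coef hA i 1) = e := by
    have := sum_coef_mul hA 1 (A *ᵥ 1)
    simp only [coef_mulVec] at this
    have h2 : (1 : Fin n → ℝ) ⬝ᵥ A *ᵥ 1 = e := by
      rw [he, Finset.sum_comm]
      simp [dotProduct, mulVec]
    rw [← h2, ← this]
    exact Finset.sum_congr rfl fun i _ => by ring
  obtain ⟨i0, hi0⟩ : ∃ i0, e / n ≤ hA.eigenvalues i0 := by
    by_contra! hcon
    have hlt : ∑ i, hA.eigenvalues i * (coef hA i 1 * coef hA i 1)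
        < ∑ i, e / n * (coef hA i 1 * coef hA i 1) := by
      obtain ⟨j, -, hj⟩ := Finset.exists_lt_of_sum_lt (s := Finset.univ)
        (f := fun _ : Fin n => (0 : ℝ)) (g := fun i => coef hA i 1 * coef hA i 1)
        (by rw [hone]; simpa using hn)
      refine Finset.sum_lt_sum (fun i _ => ?_) ⟨j, Finset.mem_univ _, ?_⟩
      · exact mul_le_mul_of_nonneg_right (hcon i).le (mul_self_nonneg _)
      · exact mul_lt_mul_of_pos_right (hcon j) hj
    rw [hray, ← Finset.mul_sum, hone, div_mul_cancel₀ _ hn.ne'] at hlt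
    exact lt_irrefl _ hlt
  have hsum : ((k : ℝ) - 1) * s ^ 2 + (e / n) ^ 2 ≤ e := by
    have hsplit := Finset.add_sum_erase Finset.univ (fun i => hA.eigenvalues i ^ 2)
      (Finset.mem_univ i0)
    rw [hsq] at hsplit
    refine le_trans (le_of_eq (add_comm _ _)) (le_trans (add_le_add ?_ ?_) hsplit.le)
    · exact pow_le_pow_left₀ (by positivity) hi0 2
    · set S := (Finset.univ.filter (fun i => s ≤ |hA.eigenvalues i|)).erase i0 with hS
      have hc : k - 1 ≤ S.card := (Nat.sub_le_sub_right hcard 1).trans Finset.pred_card_le_card_erase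
      have hc' : (k : ℝ) - 1 ≤ S.card := by
        have : ((k - 1 : ℕ) : ℝ) ≤ S.card := by exact_mod_cast hc
        rwa [Nat.cast_sub (by omega), Nat.cast_one] at this
      calc ((k : ℝ) - 1) * s ^ 2 ≤ S.card * s ^ 2 := by gcongr
        _ = ∑ _i ∈ S, s ^ 2 := by simp
        _ ≤ ∑ i ∈ S, hA.eigenvalues i ^ 2 := by
          refine Finset.sum_le_sum fun i hi => ?_
          rw [← sq_abs (hA.eigenvalues i)]
          have := (Finset.mem_filter.1 (Finset.mem_of_mem_erase hi)).2
          exact pow_le_pow_left₀ hs0.le this 2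
        _ ≤ _ := Finset.sum_le_sum_of_subset_of_nonneg
          (Finset.erase_subset_erase _ (Finset.filter_subset _ _)) fun i _ _ => sq_nonneg _
  have hfin : (2 * r * s) ^ 2 ≤ (n : ℝ) ^ 2 := by
    have h1 : e = e / n * n := (div_mul_cancel₀ _ hn.ne').symm
    have h2 : (2 * r * s) ^ 2 = 4 * (((k : ℝ) - 1) * s ^ 2) := by rw [← hr2]; ring
    nlinarith [sq_nonneg (2 * (e / n) - n)]
  have hle : 2 * r * s ≤ n := le_of_sq_le_sq hfin hn.le
  rw [div_le_div_iff₀ hn (by positivity)]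
  linarith

/-! ### The graph built from orthogonal sign vectors -/

/-- For sign vectors `h a` indexed by `ZMod q`, the graph on `ZMod q × X` whose adjacency matrix,
after adding the identity, is `(J + K) / 2`, where `K` has the rank-one block
`h (i + j) (h (i + j))ᵀ` in position `(i, j)`. -/
def blockGraph {q : ℕ} {X : Type*} (h : ZMod q → X → ℤˣ) : SimpleGraph (ZMod q × X) where
  Adj u v := u ≠ v ∧ h (u.1 + v.1) u.2 = h (u.1 + v.1) v.2
  symm := ⟨fun u v ⟨h1, h2⟩ => ⟨h1.symm, by rw [add_comm, h2]⟩⟩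
  loopless := ⟨fun u hu => hu.1 rfl⟩

/-- The vector with constant part `c none` and, on the block `{i} × X`, the combination of the
sign vectors `h a` with coefficients `c (some (i, a))`. -/
noncomputable def blockVec {q : ℕ} [NeZero q] {X : Type*} (h : ZMod q → X → ℤˣ) :
    (Option (ZMod q × ZMod q) → ℝ) →ₗ[ℝ] (ZMod q × X → ℝ) where
  toFun c u := c none + ∑ a, c (some (u.1, a)) * ((h a u.2 : ℤ) : ℝ)
  map_add' c d := by
    funext u
    simp only [Pi.add_apply, add_mul, Finset.sum_add_distrib]
    ring
  map_smul' t c := by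
    funext u
    simp [mul_add, Finset.mul_sum, mul_assoc]

section Block

variable {q : ℕ} [NeZero q] {X : Type*} [Fintype X] (h : ZMod q → X → ℤˣ)

theorem unit_sq (z : ℤˣ) : ((z : ℤ) : ℝ) * ((z : ℤ) : ℝ) = 1 := by
  rcases Int.units_eq_one_or z with rfl | rfl <;> norm_num

theorem sum_affine_mul (h1 : ∀ a, ∑ x, ((h a x : ℤ) : ℝ) = 0)
    (h2 : ∀ a b, a ≠ b → ∑ x, ((h a x : ℤ) : ℝ) * ((h b x : ℤ) : ℝ) = 0)
    (α : ℝ) (β : ZMod q → ℝ) (b : ZMod q) :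
    ∑ x, ((h b x : ℤ) : ℝ) * (α + ∑ a, β a * ((h a x : ℤ) : ℝ)) = Fintype.card X * β b := by
  have h3 : ∀ x, ((h b x : ℤ) : ℝ) * (α + ∑ a, β a * ((h a x : ℤ) : ℝ))
      = α * ((h b x : ℤ) : ℝ) + ∑ a, β a * (((h b x : ℤ) : ℝ) * ((h a x : ℤ) : ℝ)) := by
    intro x
    rw [mul_add, Finset.mul_sum, mul_comm α]
    congr 1
    exact Finset.sum_congr rfl fun a _ => by ring
  simp only [h3]
  rw [Finset.sum_add_distrib, ← Finset.mul_sum, h1, mul_zero, zero_add, Finset.sum_comm,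
    Finset.sum_eq_single b]
  · simp [unit_sq, mul_comm]
  · intro a _ hab
    rw [← Finset.mul_sum, h2 b a hab.symm, mul_zero]
  · simp

theorem sum_affine (h1 : ∀ a, ∑ x, ((h a x : ℤ) : ℝ) = 0) (α : ℝ) (β : ZMod q → ℝ) :
    ∑ x, (α + ∑ a, β a * ((h a x : ℤ) : ℝ)) = Fintype.card X * α := by
  rw [Finset.sum_add_distrib, Finset.sum_comm]
  simp [← Finset.mul_sum, h1]

theorem sum_affine_sq (h1 : ∀ a, ∑ x, ((h a x : ℤ) : ℝ) = 0)
    (h2 : ∀ a b, a ≠ b → ∑ x, ((h a x : ℤ) : ℝ) * ((h b x : ℤ) : ℝ) = 0)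
    (α : ℝ) (β : ZMod q → ℝ) :
    ∑ x, (α + ∑ a, β a * ((h a x : ℤ) : ℝ)) * (α + ∑ a, β a * ((h a x : ℤ) : ℝ))
      = Fintype.card X * (α ^ 2 + ∑ a, β a ^ 2) := by
  have h3 : ∀ x, (α + ∑ a, β a * ((h a x : ℤ) : ℝ)) * (α + ∑ a, β a * ((h a x : ℤ) : ℝ))
      = α * (α + ∑ a, β a * ((h a x : ℤ) : ℝ))
        + ∑ b, β b * (((h b x : ℤ) : ℝ) * (α + ∑ a, β a * ((h a x : ℤ) : ℝ))) := by
    intro x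
    rw [add_mul, Finset.sum_mul]
    refine congrArg _ ?_
    exact Finset.sum_congr rfl fun a _ => by ring
  simp only [h3]
  rw [Finset.sum_add_distrib, ← Finset.mul_sum, sum_affine h h1, Finset.sum_comm]
  simp only [← Finset.mul_sum, sum_affine_mul h h1 h2]
  rw [mul_add, Finset.mul_sum]
  congr 1
  · ring
  · exact Finset.sum_congr rfl fun a _ => by ring

theorem blockVec_dot (h1 : ∀ a, ∑ x, ((h a x : ℤ) : ℝ) = 0)
    (h2 : ∀ a b, a ≠ b → ∑ x, ((h a x : ℤ) : ℝ) * ((h b x : ℤ) : ℝ) = 0)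
    (c : Option (ZMod q × ZMod q) → ℝ) :
    blockVec h c ⬝ᵥ blockVec h c
      = Fintype.card X * (q * c none ^ 2 + ∑ i, ∑ a, c (some (i, a)) ^ 2) := by
  simp only [dotProduct, blockVec, LinearMap.coe_mk, AddHom.coe_mk]
  rw [Fintype.sum_prod_type]
  simp only [sum_affine_sq h h1 h2]
  rw [← Finset.mul_sum, Finset.sum_add_distrib]
  simp

/-- The coefficients of the image of `blockVec h c` under the adjacency matrix: `(J + K) / 2`
scales the constant part by `N q / 2` and sends the coordinate at `(a - i, a)` to `(i, a)`, scaled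
by `N / 2`, where `N = |X|`. -/
noncomputable def blockCoeff (N : ℝ) (c : Option (ZMod q × ZMod q) → ℝ) :
    Option (ZMod q × ZMod q) → ℝ
  | none => (N * q / 2 - 1) * c none
  | some (i, a) => N / 2 * c (some (a - i, a)) - c (some (i, a))

open Classical in
theorem adj_mulVec_blockVec (h1 : ∀ a, ∑ x, ((h a x : ℤ) : ℝ) = 0)
    (h2 : ∀ a b, a ≠ b → ∑ x, ((h a x : ℤ) : ℝ) * ((h b x : ℤ) : ℝ) = 0)
    (c : Option (ZMod q × ZMod q) → ℝ) :
    (blockGraph h).adjMatrix ℝ *ᵥ blockVec h c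
      = blockVec h (blockCoeff (Fintype.card X) c) := by
  funext u
  have hentry : ∀ v, (blockGraph h).adjMatrix ℝ u v * blockVec h c v
      = (1 / 2 * blockVec h c v + 1 / 2 * ((h (u.1 + v.1) u.2 : ℤ) : ℝ) *
          (((h (u.1 + v.1) v.2 : ℤ) : ℝ) * blockVec h c v))
        - if u = v then blockVec h c v else 0 := by
    intro v
    rw [SimpleGraph.adjMatrix_apply]
    by_cases huv : u = v
    · subst huv
      have := unit_sq (h (u.1 + u.1) u.2)
      rw [if_neg (fun hh => hh.1 rfl), if_pos rfl]
      linear_combination (-1 / 2 * blockVec h c u) * this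
    · rw [if_neg huv]
      by_cases hh : h (u.1 + v.1) u.2 = h (u.1 + v.1) v.2
      · rw [if_pos ⟨huv, hh⟩, hh]
        have := unit_sq (h (u.1 + v.1) v.2)
        linear_combination (-1 / 2 * blockVec h c v) * this
      · rw [if_neg (fun hc => hh hc.2)]
        rcases Int.units_eq_one_or (h (u.1 + v.1) u.2) with e1 | e1 <;>
        rcases Int.units_eq_one_or (h (u.1 + v.1) v.2) with e2 | e2 <;>
        first
          | exact absurd (e1.trans e2.symm) hh
          | (rw [e1, e2]; push_cast; ring)
  rw [mulVec, dotProduct]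
  simp only [hentry]
  rw [Finset.sum_sub_distrib, Finset.sum_ite_eq, if_pos (Finset.mem_univ _),
    Finset.sum_add_distrib, Fintype.sum_prod_type, Fintype.sum_prod_type]
  simp only [← Finset.mul_sum, mul_assoc]
  simp only [blockVec, LinearMap.coe_mk, AddHom.coe_mk, blockCoeff]
  simp only [sum_affine h h1, sum_affine_mul h h1 h2]
  -- The block index `j` is replaced by `a = i + j`.
  rw [← (Equiv.subRight u.1).sum_comp
    (fun j => ((h (u.1 + j) u.2 : ℤ) : ℝ) * ((Fintype.card X : ℝ) * c (some (j, u.1 + j))))]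
  simp only [Equiv.subRight_apply, add_sub_cancel, Finset.sum_const, Finset.card_univ,
    ZMod.card, nsmul_eq_mul, sub_mul, Finset.sum_sub_distrib]
  have : ∑ a, (Fintype.card X : ℝ) / 2 * c (some (a - u.1, a)) * ((h a u.2 : ℤ) : ℝ)
      = 1 / 2 * ∑ a, ((h a u.2 : ℤ) : ℝ) * ((Fintype.card X : ℝ) * c (some (a - u.1, a))) := by
    rw [Finset.mul_sum]
    exact Finset.sum_congr rfl fun a _ => by ring
  rw [this]
  ring

theorem blockCoeff_expanding (N : ℝ) (hN : 2 ≤ N) (c : Option (ZMod q × ZMod q) → ℝ) :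
    (N / 2 - 1) ^ 2 * (q * c none ^ 2 + ∑ i, ∑ a, c (some (i, a)) ^ 2)
      ≤ q * blockCoeff N c none ^ 2 + ∑ i, ∑ a, blockCoeff N c (some (i, a)) ^ 2 := by
  have hq : (1 : ℝ) ≤ q := by exact_mod_cast NeZero.one_le
  have hnone : (N / 2 - 1) ^ 2 * (q * c none ^ 2) ≤ q * blockCoeff N c none ^ 2 := by
    simp only [blockCoeff, mul_pow]
    have h3 : (N / 2 - 1) ^ 2 ≤ (N * q / 2 - 1) ^ 2 :=
      pow_le_pow_left₀ (by linarith) (by nlinarith) 2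
    nlinarith [mul_le_mul_of_nonneg_right h3 (by positivity : 0 ≤ (q : ℝ) * c none ^ 2)]
  have hperm : ∑ i, ∑ a, c (some (a - i, a)) ^ 2 = ∑ i, ∑ a, c (some (i, a)) ^ 2 := by
    rw [Finset.sum_comm, Finset.sum_comm (f := fun i a => c (some (i, a)) ^ 2)]
    refine Finset.sum_congr rfl fun a _ => ?_
    exact (Equiv.subLeft a).sum_comp (fun i => c (some (i, a)) ^ 2)
  have hsome : (N / 2 - 1) ^ 2 * ∑ i, ∑ a, c (some (i, a)) ^ 2
      ≤ ∑ i, ∑ a, blockCoeff N c (some (i, a)) ^ 2 := by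
    have h4 : ∑ i, ∑ a, ((N ^ 2 / 4 - N / 2) * c (some (a - i, a)) ^ 2
        + (1 - N / 2) * c (some (i, a)) ^ 2)
        ≤ ∑ i, ∑ a, blockCoeff N c (some (i, a)) ^ 2 := by
      refine Finset.sum_le_sum fun i _ => Finset.sum_le_sum fun a _ => ?_
      simp only [blockCoeff]
      nlinarith [mul_nonneg (by linarith : (0 : ℝ) ≤ N)
        (sq_nonneg (c (some (a - i, a)) - c (some (i, a))))]
    simp only [Finset.sum_add_distrib, ← Finset.mul_sum, hperm] at h4
    refine le_trans (le_of_eq ?_) h4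
    ring
  linarith

/-- Orthogonal balanced sign vectors produce a graph of order `q N` with `q² + 1` singular values
at least `N / 2 - 1`. -/
theorem exists_graph_le_graphSing (h1 : ∀ a, ∑ x, ((h a x : ℤ) : ℝ) = 0)
    (h2 : ∀ a b, a ≠ b → ∑ x, ((h a x : ℤ) : ℝ) * ((h b x : ℤ) : ℝ) = 0)
    (hN : 2 ≤ Fintype.card X) (k : ℕ) (hk : 1 ≤ k) (hkq : k ≤ q ^ 2 + 1) :
    k ≤ q * Fintype.card X ∧ ∃ G : SimpleGraph (Fin (q * Fintype.card X)),
      (Fintype.card X : ℝ) / 2 - 1 ≤ graphSing G k := by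
  classical
  have hcardV : Fintype.card (ZMod q × X) = q * Fintype.card X := by
    rw [Fintype.card_prod, ZMod.card]
  let e : Fin (q * Fintype.card X) ≃ ZMod q × X := (Fintype.equivFinOfCardEq hcardV).symm
  let G : SimpleGraph (Fin (q * Fintype.card X)) := (blockGraph h).comap e
  have hN' : (2 : ℝ) ≤ Fintype.card X := by exact_mod_cast hN
  have hA : (G.adjMatrix ℝ).IsHermitian := by
    rw [Matrix.IsHermitian, conjTranspose_eq_transpose_of_trivial]
    exact G.isSymm_adjMatrix
  let φ := (LinearMap.funLeft ℝ ℝ e).comp (blockVec h)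
  have hdot : ∀ v : ZMod q × X → ℝ, (v ∘ e) ⬝ᵥ (v ∘ e) = v ⬝ᵥ v :=
    fun v => e.sum_comp (fun u => v u * v u)
  have hφ : ∀ c, φ c = blockVec h c ∘ e := fun c => rfl
  have hmul : ∀ c, G.adjMatrix ℝ *ᵥ φ c
      = blockVec h (blockCoeff (Fintype.card X) c) ∘ e := by
    intro c
    rw [← adj_mulVec_blockVec h h1 h2]
    funext p
    simp only [mulVec, dotProduct, Function.comp_apply]
    rw [← e.sum_comp]
    refine Finset.sum_congr rfl fun p' _ => ?_
    simp only [SimpleGraph.adjMatrix_apply, hφ, Function.comp_apply]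
    rfl
  have hcount := card_le_of_expanding hA φ ((Fintype.card X : ℝ) / 2 - 1)
    (by
      intro c hc
      rw [hφ, hdot, blockVec_dot h h1 h2]
      refine mul_pos (by linarith) ?_
      have hq : (0 : ℝ) < q := by exact_mod_cast NeZero.pos q
      by_contra! hle
      have hs : 0 ≤ ∑ i, ∑ a, c (some (i, a)) ^ 2 :=
        Finset.sum_nonneg fun i _ => Finset.sum_nonneg fun a _ => sq_nonneg _
      have h0 : 0 ≤ (q : ℝ) * c none ^ 2 := by positivity
      apply hc
      funext b
      rcases b with _ | ⟨i, a⟩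
      · have : (q : ℝ) * c none ^ 2 = 0 := by linarith
        simpa [hq.ne'] using this
      · have hs0 : ∑ i, ∑ a, c (some (i, a)) ^ 2 = 0 := by linarith
        rw [Finset.sum_eq_zero_iff_of_nonneg
          (fun i _ => Finset.sum_nonneg fun a _ => sq_nonneg _)] at hs0
        have := hs0 i (Finset.mem_univ _)
        rw [Finset.sum_eq_zero_iff_of_nonneg (fun a _ => sq_nonneg _)] at this
        simpa using this a (Finset.mem_univ _))
    (by
      intro c
      rw [hmul, hφ, hdot, hdot, blockVec_dot h h1 h2, blockVec_dot h h1 h2, mul_left_comm]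
      exact mul_le_mul_of_nonneg_left (blockCoeff_expanding _ hN' c) (by positivity))
  have hB : Fintype.card (Option (ZMod q × ZMod q)) = q ^ 2 + 1 := by
    rw [Fintype.card_option, Fintype.card_prod, ZMod.card, sq]
  rw [hB] at hcount
  have hkn : k ≤ q * Fintype.card X := by
    refine hkq.trans (hcount.trans ((Finset.card_le_univ _).trans ?_))
    simp
  refine ⟨hkn, G, ?_⟩
  unfold graphSing
  exact (le_singval_iff _ hA hk hkn _).2 (hkq.trans hcount)

end Block

/-! ### Coordinate functions on a sign cube -/

theorem sum_sign {ι : Type*} [Fintype ι] [DecidableEq ι] (a : ι) :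
    ∑ x : ι → ℤˣ, ((x a : ℤ) : ℝ) = 0 := by
  have := Equiv.sum_comp (Equiv.mulLeft (Pi.mulSingle a (-1) : ι → ℤˣ))
    (fun x : ι → ℤˣ => ((x a : ℤ) : ℝ))
  simp only [Equiv.coe_mulLeft, Pi.mul_apply, Pi.mulSingle_eq_same, neg_mul, one_mul,
    Units.val_neg, Int.cast_neg, Finset.sum_neg_distrib] at this
  linarith

theorem sum_sign_mul {ι : Type*} [Fintype ι] [DecidableEq ι] (a b : ι) (hab : a ≠ b) :
    ∑ x : ι → ℤˣ, ((x a : ℤ) : ℝ) * ((x b : ℤ) : ℝ) = 0 := by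
  have := Equiv.sum_comp (Equiv.mulLeft (Pi.mulSingle a (-1) : ι → ℤˣ))
    (fun x : ι → ℤˣ => ((x a : ℤ) : ℝ) * ((x b : ℤ) : ℝ))
  simp only [Equiv.coe_mulLeft, Pi.mul_apply, Pi.mulSingle_eq_same, neg_mul, one_mul,
    Pi.mulSingle_eq_of_ne hab.symm, Units.val_neg, Int.cast_neg, Finset.sum_neg_distrib] at this
  linarith

theorem stmt14 (k : ℕ) (hk : 3 ≤ k) :
    1 / (2 * Real.sqrt ((k : ℝ) - 1)) ≥ cStar k ∧
    cStar k > 1 / (2 * Real.sqrt ((k : ℝ) - 1) + 2) := by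
  have hub : ∀ x ∈ { x : ℝ | ∃ n : ℕ, k ≤ n ∧ ∃ G : SimpleGraph (Fin n), x = graphSing G k / n },
      x ≤ 1 / (2 * Real.sqrt ((k : ℝ) - 1)) := by
    rintro x ⟨n, hn, G, rfl⟩
    exact graphSing_le (by omega) hn G
  refine ⟨Real.sSup_le hub (by positivity), ?_⟩
  have hk1 : (2 : ℝ) ≤ (k : ℝ) - 1 := by
    have : (3 : ℝ) ≤ k := by exact_mod_cast hk
    linarith
  set r := Real.sqrt ((k : ℝ) - 1) with hr
  have hr0 : 0 < r := Real.sqrt_pos.2 (by linarith)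
  have hr2 : r ^ 2 = (k : ℝ) - 1 := Real.sq_sqrt (by linarith)
  -- `q` is the least integer with `k ≤ q² + 1`.
  obtain ⟨q, hq⟩ : ∃ q, q = ⌈r⌉₊ := ⟨_, rfl⟩
  have hq0 : 0 < q := hq ▸ Nat.ceil_pos.2 hr0
  have : NeZero q := ⟨hq0.ne'⟩
  have hq0' : (0 : ℝ) < q := by exact_mod_cast hq0
  have hrq : r ≤ q := hq ▸ Nat.le_ceil r
  have hqr : (q : ℝ) < r + 1 := hq ▸ Nat.ceil_lt_add_one hr0.le
  have hkq : k ≤ q ^ 2 + 1 := by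
    have : (k : ℝ) ≤ (q : ℝ) ^ 2 + 1 := by nlinarith
    exact_mod_cast this
  have hgap : 0 < 1 / (2 * (q : ℝ)) - 1 / (2 * r + 2) :=
    sub_pos.2 (one_div_lt_one_div_of_lt (by positivity) (by linarith))
  obtain ⟨m, hm⟩ := exists_nat_gt (1 / (q * (1 / (2 * (q : ℝ)) - 1 / (2 * r + 2))))
  -- The extra `m` coordinates only serve to make the cube large.
  let h : ZMod q → (ZMod q ⊕ Fin m → ℤˣ) → ℤˣ := fun a x => x (Sum.inl a)
  obtain ⟨N, hNdef⟩ : ∃ N, N = Fintype.card (ZMod q ⊕ Fin m → ℤˣ) := ⟨_, rfl⟩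
  have hNval : N = 2 ^ (q + m) := by
    rw [hNdef]
    simp [ZMod.card]
  have hN2 : 2 ≤ N := by
    rw [hNval]
    calc 2 = 2 ^ 1 := by norm_num
      _ ≤ 2 ^ (q + m) := Nat.pow_le_pow_right (by norm_num) (by omega)
  have hmN : m ≤ N := by
    rw [hNval]
    exact (Nat.lt_two_pow_self).le.trans (Nat.pow_le_pow_right (by norm_num) (by omega))
  have hgraph := exists_graph_le_graphSing h (fun a => sum_sign (Sum.inl a))
    (fun a b hab => sum_sign_mul _ _ (fun hh => hab (Sum.inl.inj hh))) (hNdef ▸ hN2) k (by omega) hkq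
  rw [← hNdef] at hgraph
  obtain ⟨hkn, G, hG⟩ := hgraph
  have hN0 : (0 : ℝ) < N := Nat.cast_pos.2 (by omega)
  have hNbig : 1 / (q * (1 / (2 * (q : ℝ)) - 1 / (2 * r + 2))) < N :=
    hm.trans_le (Nat.cast_le.2 hmN)
  have hlow : 1 / (2 * r + 2) < ((N : ℝ) / 2 - 1) / (q * N : ℕ) := by
    have h3 : ((N : ℝ) / 2 - 1) / (q * N : ℕ) = 1 / (2 * (q : ℝ)) - 1 / (q * N) := by
      push_cast
      field_simp
    rw [div_lt_iff₀ (mul_pos hq0' hgap)] at hNbig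
    have h4 : 1 / ((q : ℝ) * N) < 1 / (2 * (q : ℝ)) - 1 / (2 * r + 2) := by
      rw [div_lt_iff₀ (by positivity)]
      linarith
    rw [h3]
    linarith
  refine hlow.trans_le (le_trans ?_ (le_csSup ⟨_, hub⟩ ⟨q * N, hkn, G, rfl⟩))
  exact div_le_div_of_nonneg_right hG (by positivity)
end

section
/- Let s be an even positive integer. Then there exists a positive integer n such that for every positive integer t there is a finite simple graph G of order snt with λ_1*(G) + λ_2*(G) + ... + λ_{s²}*(G) = (1 + s)·snt/2. -/
/-!
Write `N = s n t` with `n = 2 ^ s`. For any `{0,1}`-matrix `A = (J + H) / 2`, where `J` is all-ones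
and `H` is a sign matrix, the sum of `s²` singular values is at most `(1 + s) N / 2`, and equality
is reached when `H` is symmetric with exactly `s²` nonzero singular values, all equal to
`m = n t`, and `H 1 = m 1`. The diagonal of `H` should be `-1` to make `A` an adjacency matrix.

Such an `H` is built from `s × s` blocks of size `m`: block `(i, j)` is `± r_ij r_jiᵀ`, with sign
`-` exactly when `i = j`, where for each `i` the sign vectors `r_ij` are orthogonal. They are
Rademacher functions on the cube `{0,1}^s`, except that `r_{i, p i}` is the all-ones vector for a
fixed-point-free involution `p` of the block labels; `p` exists because `s` is even.

Let `W` be the matrix with columns `r_ij` placed in block `i`. Then `Wᵀ W = m I`, and with `F` the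
signed flip of pairs of block labels and `x` the indicator of the graph of `p` one has `H = W F Wᵀ`,
`J = W x xᵀ Wᵀ`, `F² = 1`, `F x = x`. Hence `A² = B²` for the positive semidefinite matrix
`B = (J + W Wᵀ) / 2` (`Bmat_sq`), so that `B = |A|`. The sum of all singular values of `A` is
therefore `tr B = (N + m s²) / 2 = (1 + s) N / 2` (`sum_abs_eigenvalues`, `Bmat_trace`), and since
`A` factors through `W` it has rank at most `s²` (`Amat_rank`), so the top `s²` singular values
already account for the whole sum (`sum_singval`).
-/

open Matrix BigOperators

/-! ### Largest singular values and the trace norm -/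

/-- A list of nonnegative reals in nondecreasing order with at most `K` nonzero entries is summed
by its last `K` entries. -/
lemma sum_getD_top (l : List ℝ) (hl : l.Pairwise (· ≤ ·)) (h0 : ∀ x ∈ l, 0 ≤ x) (K : ℕ)
    (hK : K ≤ l.length) (hc : l.countP (fun x => decide (x ≠ 0)) ≤ K) :
    ∑ i ∈ Finset.range K, l.getD (l.length - (i + 1)) 0 = l.sum := by
  induction K generalizing l with
  | zero =>
    have : ∀ x ∈ l, x = 0 := by
      have := List.countP_eq_zero.1 (Nat.le_zero.1 hc)
      simpa using this
    simp [List.sum_eq_zero this]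
  | succ K ih =>
    rcases List.eq_nil_or_concat l with rfl | ⟨l', a, rfl⟩
    · simp at hK
    have hl' := List.pairwise_append.1 (by simpa using hl)
    rw [Finset.sum_range_succ']
    have hc' : l'.countP (fun x => decide (x ≠ 0)) ≤ K := by
      rw [List.concat_eq_append, List.countP_append] at hc
      by_cases ha : a = 0
      · have : l'.countP (fun x => decide (x ≠ 0)) = 0 := by
          rw [List.countP_eq_zero]
          intro x hx
          have h1 : x ≤ a := hl'.2.2 x hx a (by simp)
          have h2 := h0 x (by simp [hx])
          simp; linarith
        omega
      · simp [ha] at hc ⊢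
        omega
    have key := ih l' hl'.1 (fun x hx => h0 x (by simp [hx])) (by simpa using hK) hc'
    have hKl : K ≤ l'.length := by simpa using hK
    have : ∀ i ∈ Finset.range K, (l'.concat a).getD ((l'.concat a).length - (i + 1 + 1)) 0
        = l'.getD (l'.length - (i + 1)) 0 := by
      intro i hi
      have hi := Finset.mem_range.1 hi
      have e : (l'.concat a).length - (i + 1 + 1) = l'.length - (i + 1) := by
        simp
      rw [e, List.concat_eq_append, List.getD_append _ _ _ _ (by omega)]
    rw [Finset.sum_congr rfl this, key]
    simp [List.concat_eq_append]

/-- If a symmetric matrix has rank at most `K`, its `K` largest singular values sum to its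
trace norm. -/
lemma sum_singval {N : ℕ} (A : Matrix (Fin N) (Fin N) ℝ) (hA : A.IsHermitian) (K : ℕ)
    (hK : K ≤ N) (hr : A.rank ≤ K) :
    ∑ i ∈ Finset.range K, singval A (i + 1) = ∑ i, |hA.eigenvalues i| := by
  have hs : singAsc A = (Finset.univ.val.map (fun i => |hA.eigenvalues i|)).sort (· ≤ ·) := by
    unfold singAsc
    rw [dif_pos hA]
  have hm : ((singAsc A : List ℝ) : Multiset ℝ)
      = Finset.univ.val.map (fun i => |hA.eigenvalues i|) := by
    rw [hs, Multiset.sort_eq]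
  have hlen : (singAsc A).length = N := by
    rw [hs, Multiset.length_sort]; simp
  have hsum : (singAsc A).sum = ∑ i, |hA.eigenvalues i| := by
    rw [← Multiset.sum_coe, hm]; rfl
  rw [← hsum, ← sum_getD_top (singAsc A) ?_ ?_ K (by omega) ?_]
  · simp only [singval, hlen]
  · rw [hs]; exact Multiset.pairwise_sort _ _
  · intro x hx
    have : x ∈ ((singAsc A : List ℝ) : Multiset ℝ) := hx
    rw [hm, Multiset.mem_map] at this
    obtain ⟨i, -, rfl⟩ := this
    exact abs_nonneg _
  · refine le_trans (le_of_eq ?_) hr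
    rw [hA.rank_eq_card_non_zero_eigs, Fintype.card_subtype]
    have : (singAsc A).countP (fun x => decide (x ≠ 0))
        = Multiset.countP (fun x => x ≠ 0) ((singAsc A : List ℝ) : Multiset ℝ) := by
      rw [Multiset.coe_countP]
    rw [this, hm, Multiset.countP_map]
    simp only [ne_eq, abs_eq_zero]
    rfl

open scoped MatrixOrder Matrix.Norms.L2Operator in
/-- The trace norm of a symmetric matrix is the trace of its absolute value, i.e. of the positive
semidefinite square root of its square. -/
lemma sum_abs_eigenvalues {N : ℕ} (A B : Matrix (Fin N) (Fin N) ℝ) (hA : A.IsHermitian)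
    (hB : B.PosSemidef) (h : B * B = A * A) :
    ∑ i, |hA.eigenvalues i| = B.trace := by
  let U : Matrix (Fin N) (Fin N) ℝ := (hA.eigenvectorUnitary).val
  have hUU : Uᴴ * U = 1 := Unitary.coe_star_mul_self hA.eigenvectorUnitary
  have hAs : A = U * diagonal hA.eigenvalues * Uᴴ := hA.spectral_theorem
  let C : Matrix (Fin N) (Fin N) ℝ := U * diagonal (fun i => |hA.eigenvalues i|) * Uᴴ
  have hC : C.PosSemidef :=
    (PosSemidef.diagonal (fun i => abs_nonneg _)).mul_mul_conjTranspose_same U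
  have conj_mul : ∀ d : Fin N → ℝ, (U * diagonal d * Uᴴ) * (U * diagonal d * Uᴴ)
      = U * diagonal (fun i => d i * d i) * Uᴴ := by
    intro d
    calc _ = U * diagonal d * (Uᴴ * U) * diagonal d * Uᴴ := by simp only [Matrix.mul_assoc]
      _ = U * (diagonal d * diagonal d) * Uᴴ := by rw [hUU]; simp only [Matrix.mul_assoc, mul_one]
      _ = _ := by rw [diagonal_mul_diagonal]
  have hCC : C * C = B * B := by
    rw [h]
    conv_rhs => rw [hAs]
    rw [conj_mul, conj_mul]
    simp only [abs_mul_abs_self]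
  have hCB : C = B := (CFC.mul_self_eq_mul_self_iff C B hC.nonneg hB.nonneg).1 hCC
  rw [← hCB]
  change _ = (U * _ * Uᴴ).trace
  rw [Matrix.trace_mul_comm, ← Matrix.mul_assoc, hUU, Matrix.one_mul, Matrix.trace_diagonal]

/-! ### The block sign matrix -/

section Construction

variable {S : Type*} [DecidableEq S]

/-- For fixed `i`, the vectors `rvec p i j` indexed by `j : S` are orthogonal sign vectors on the
cube `S → Bool`: the coordinate signs (Rademacher functions), except that the one with `j = p i`
is replaced by the all-ones vector. -/
def rvec (p : S → S) (i j : S) (a : S → Bool) : ℝ :=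
  if j = p i then 1 else if a j then 1 else -1

lemma rvec_sq (p : S → S) (i j : S) (a : S → Bool) : rvec p i j a * rvec p i j a = 1 := by
  unfold rvec; split_ifs <;> norm_num

lemma rvec_cases (p : S → S) (i j : S) (a : S → Bool) :
    rvec p i j a = 1 ∨ rvec p i j a = -1 := by
  unfold rvec; split_ifs <;> simp

/-- The sign attached to the block `(i, j)`; diagonal blocks are negated. -/
def sgn (x : S × S) : ℝ := if x.1 = x.2 then -1 else 1

lemma sgn_swap (x : S × S) : sgn x.swap = sgn x := by
  simp [sgn, eq_comm]

/-- The signed flip of the pairs in `S × S`. -/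
def Fmat : Matrix (S × S) (S × S) ℝ := Matrix.of fun x y => if y = x.swap then sgn x else 0

/-- The indicator of the graph of `p`; the coordinates of the all-ones vector with respect to the
columns of `Wmat`. -/
def xvec (p : S → S) (x : S × S) : ℝ := if x.2 = p x.1 then 1 else 0

lemma Fmat_transpose : (Fmat (S := S))ᵀ = Fmat := by
  ext x y
  simp only [Fmat, Matrix.transpose_apply, Matrix.of_apply]
  by_cases h : x = y.swap
  · subst h; simp [sgn_swap]
  · rw [if_neg h, if_neg]
    rintro rfl; simp at h

variable [Fintype S]

lemma sum_eq_zero_of_flip (f : (S → Bool) → ℝ) (j : S)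
    (h : ∀ a, f (Function.update a j (!a j)) = - f a) : ∑ a, f a = 0 := by
  have hi : Function.Involutive (fun a : S → Bool => Function.update a j (!a j)) := by
    intro a; simp
  have := Equiv.sum_comp hi.toPerm f
  simp only [Function.Involutive.coe_toPerm, h, Finset.sum_neg_distrib] at this
  linarith

lemma rvec_orth (p : S → S) (i j l : S) :
    ∑ a, rvec p i j a * rvec p i l a = if j = l then 2 ^ Fintype.card S else 0 := by
  split_ifs with h
  · subst h
    simp [rvec_sq]
  · by_cases hj : j = p i
    · have hl : l ≠ p i := fun hl => h (hj.trans hl.symm)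
      refine sum_eq_zero_of_flip _ l fun a => ?_
      simp only [rvec, hj, hl, if_true, if_false, Function.update_self]
      cases a l <;> simp
    · refine sum_eq_zero_of_flip _ j fun a => ?_
      simp only [rvec, hj, if_false, Function.update_self,
        Function.update_of_ne (Ne.symm h)]
      cases a j <;> split_ifs <;> simp_all

lemma Fmat_mul (M : Matrix (S × S) (S × S) ℝ) (x y : S × S) :
    (Fmat * M : Matrix _ _ ℝ) x y = sgn x * M x.swap y := by
  simp [Matrix.mul_apply, Fmat]

lemma Fmat_sq : Fmat * Fmat = (1 : Matrix (S × S) (S × S) ℝ) := by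
  ext x y
  rw [Fmat_mul]
  simp only [Fmat, Matrix.of_apply, Prod.swap_swap, sgn_swap, Matrix.one_apply, eq_comm (a := y)]
  split_ifs
  · unfold sgn; split_ifs <;> norm_num
  · simp

lemma Fmat_mul_X (p : S → S) (hp : ∀ i, p (p i) = i) (hp' : ∀ i, p i ≠ i) :
    Fmat * vecMulVec (xvec p) (xvec p) = vecMulVec (xvec p) (xvec p) := by
  ext ⟨i, j⟩ y
  rw [Fmat_mul]
  simp only [vecMulVec_apply, ← mul_assoc]
  congr 1
  simp only [sgn, xvec, Prod.swap]
  by_cases h : j = p i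
  · subst h
    simp [hp, (hp' i).symm]
  · have : i ≠ p j := by rintro rfl; simp [hp] at h
    simp [h, this]

lemma X_mul_Fmat (p : S → S) (hp : ∀ i, p (p i) = i) (hp' : ∀ i, p i ≠ i) :
    vecMulVec (xvec p) (xvec p) * Fmat = vecMulVec (xvec p) (xvec p) := by
  have := congrArg Matrix.transpose (Fmat_mul_X p hp hp')
  simpa [Matrix.transpose_mul, Fmat_transpose, transpose_vecMulVec] using this

variable {N t : ℕ} (e : Fin N ≃ S × ((S → Bool) × Fin t))

/-- The `N × S²` matrix whose column `(i, j)` is `rvec p i j`, repeated `t` times, supported on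
block `i` of the vertex set. -/
def Wmat (p : S → S) : Matrix (Fin N) (S × S) ℝ :=
  Matrix.of fun v x => if (e v).1 = x.1 then rvec p x.1 x.2 (e v).2.1 else 0

lemma Wmat_gram (p : S → S) :
    (Wmat e p)ᵀ * Wmat e p = ((2 : ℝ) ^ Fintype.card S * t) • 1 := by
  ext ⟨i, j⟩ ⟨k, l⟩
  simp only [Matrix.mul_apply, Wmat, Matrix.transpose_apply, Matrix.of_apply]
  rw [Equiv.sum_comp e (fun v => (if v.1 = i then rvec p i j v.2.1 else 0) *
    (if v.1 = k then rvec p k l v.2.1 else 0))]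
  by_cases hik : i = k
  · subst hik
    have := rvec_orth p i j l
    simp only [Fintype.sum_prod_type, Finset.sum_const, ← ite_and, mul_ite, ite_mul, mul_zero,
      zero_mul, Matrix.smul_apply, Matrix.one_apply, Prod.mk.injEq, true_and, smul_eq_mul, mul_one]
    simp [← Finset.mul_sum, this]
    split_ifs <;> ring
  · have : ∀ v : S × ((S → Bool) × Fin t), (if v.1 = i then rvec p i j v.2.1 else 0) *
        (if v.1 = k then rvec p k l v.2.1 else 0) = 0 := by
      intro v
      by_cases h : v.1 = i
      · simp [h, hik]
      · simp [h]
    simp [this, hik]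

lemma Wmat_mulVec (p : S → S) : Wmat e p *ᵥ xvec p = fun _ => 1 := by
  ext v
  simp [Matrix.mulVec, dotProduct, Wmat, xvec, Fintype.sum_prod_type, rvec]

lemma W_X_W (p : S → S) :
    Wmat e p * vecMulVec (xvec p) (xvec p) * (Wmat e p)ᵀ = Matrix.of fun _ _ => 1 := by
  rw [mul_vecMulVec, vecMulVec_mul, vecMul_transpose, Wmat_mulVec]
  ext; simp [vecMulVec_apply]

lemma W_F_W (p : S → S) (v w : Fin N) :
    (Wmat e p * Fmat (S := S) * (Wmat e p)ᵀ) v w = sgn ((e v).1, (e w).1) *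
      (rvec p (e v).1 (e w).1 (e v).2.1 * rvec p (e w).1 (e v).1 (e w).2.1) := by
  rw [Matrix.mul_assoc]
  have : ∀ x, (Fmat (S := S) * (Wmat e p)ᵀ) x w = sgn x * Wmat e p w x.swap := by
    intro x; simp [Matrix.mul_apply, Fmat]
  simp only [Matrix.mul_apply (M := Wmat e p), this]
  rw [Finset.sum_eq_single ((e v).1, (e w).1)]
  · simp [Wmat]; ring
  · rintro ⟨i, j⟩ - h
    simp only [Wmat, Matrix.of_apply, Prod.swap]
    by_cases h1 : (e v).1 = i
    · have : (e w).1 ≠ j := by rintro rfl; exact h (by rw [h1])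
      simp [this]
    · simp [h1]
  · simp

/-! ### The adjacency matrix and its absolute value -/

/-- The adjacency matrix `(J + W F Wᵀ) / 2`, where `J = W x xᵀ Wᵀ` is the all-ones matrix. -/
noncomputable def Amat (p : S → S) : Matrix (Fin N) (Fin N) ℝ :=
  (1 / 2 : ℝ) • (Wmat e p * (vecMulVec (xvec p) (xvec p) + Fmat) * (Wmat e p)ᵀ)

/-- The absolute value `(J + W Wᵀ) / 2` of `Amat`. -/
noncomputable def Bmat (p : S → S) : Matrix (Fin N) (Fin N) ℝ :=
  (1 / 2 : ℝ) • (Wmat e p * (vecMulVec (xvec p) (xvec p) + 1) * (Wmat e p)ᵀ)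

lemma Amat_apply (p : S → S) (v w : Fin N) :
    Amat e p v w = (1 + sgn ((e v).1, (e w).1) *
      (rvec p (e v).1 (e w).1 (e v).2.1 * rvec p (e w).1 (e v).1 (e w).2.1)) / 2 := by
  rw [Amat, Matrix.mul_add, Matrix.add_mul, W_X_W, ← W_F_W]
  simp; ring

lemma Amat_cases (p : S → S) (v w : Fin N) : Amat e p v w = 0 ∨ Amat e p v w = 1 := by
  rw [Amat_apply]
  rcases rvec_cases p (e v).1 (e w).1 (e v).2.1 with h | h <;>
  rcases rvec_cases p (e w).1 (e v).1 (e w).2.1 with h' | h' <;>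
  rw [h, h'] <;> unfold sgn <;> split_ifs <;> norm_num

lemma Amat_diag (p : S → S) (v : Fin N) : Amat e p v v = 0 := by
  rw [Amat_apply, rvec_sq]; simp [sgn]

lemma Amat_symm (p : S → S) (v w : Fin N) : Amat e p v w = Amat e p w v := by
  rw [Amat_apply, Amat_apply, mul_comm (rvec p _ _ _), ← sgn_swap]; rfl

lemma Bmat_sq (p : S → S) (hp : ∀ i, p (p i) = i) (hp' : ∀ i, p i ≠ i) :
    Bmat e p * Bmat e p = Amat e p * Amat e p := by
  have key : ∀ M : Matrix (S × S) (S × S) ℝ,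
      (Wmat e p * M * (Wmat e p)ᵀ) * (Wmat e p * M * (Wmat e p)ᵀ)
        = ((2 : ℝ) ^ Fintype.card S * t) • (Wmat e p * (M * M) * (Wmat e p)ᵀ) := by
    intro M
    calc _ = Wmat e p * M * ((Wmat e p)ᵀ * Wmat e p) * M * (Wmat e p)ᵀ := by
          simp only [Matrix.mul_assoc]
      _ = _ := by
          rw [Wmat_gram]
          simp only [Matrix.mul_smul, Matrix.smul_mul, Matrix.mul_one, Matrix.mul_assoc]
  have h : (vecMulVec (xvec p) (xvec p) + 1) * (vecMulVec (xvec p) (xvec p) + 1)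
      = (vecMulVec (xvec p) (xvec p) + Fmat) * (vecMulVec (xvec p) (xvec p) + Fmat) := by
    simp only [add_mul, mul_add, Fmat_mul_X p hp hp', X_mul_Fmat p hp hp', Fmat_sq, mul_one,
      one_mul]
  simp only [Amat, Bmat, Matrix.smul_mul, Matrix.mul_smul, key, h]

lemma Bmat_posSemidef (p : S → S) : (Bmat e p).PosSemidef := by
  have h1 : (vecMulVec (xvec p) (xvec p) + 1).PosSemidef := by
    have := posSemidef_vecMulVec_self_star (xvec p)
    simp only [star_trivial] at this
    exact this.add PosSemidef.one
  have h2 := h1.mul_mul_conjTranspose_same (Wmat e p)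
  rw [conjTranspose_eq_transpose_of_trivial] at h2
  exact h2.smul (by norm_num)

lemma Bmat_trace (p : S → S) : (Bmat e p).trace =
    (N + 2 ^ Fintype.card S * t * (Fintype.card S) ^ 2) / 2 := by
  rw [Bmat, Matrix.mul_add, Matrix.add_mul, W_X_W, Matrix.mul_one, Matrix.trace_smul,
    Matrix.trace_add, Matrix.trace_mul_comm, Wmat_gram]
  simp [Matrix.trace]; ring

lemma Amat_rank (p : S → S) : (Amat e p).rank ≤ (Fintype.card S) ^ 2 := by
  have : Amat e p = Wmat e p *
      ((1 / 2 : ℝ) • ((vecMulVec (xvec p) (xvec p) + Fmat) * (Wmat e p)ᵀ)) := by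
    rw [Amat, Matrix.mul_smul, Matrix.mul_assoc]
  rw [this]
  refine (Matrix.rank_mul_le_left _ _).trans ((Matrix.rank_le_card_width _).trans ?_)
  simp [sq]

end Construction

theorem stmt18 (s : ℕ) (hs : 0 < s) (hse : Even s) :
    ∃ n : ℕ, 0 < n ∧ ∀ t : ℕ, 0 < t →
      ∃ G : SimpleGraph (Fin (s * n * t)),
        ∑ i ∈ Finset.range (s ^ 2), graphSing G (i + 1) =
          (1 + (s : ℝ)) * ((s : ℝ) * n * t) / 2 := by
  classical
  obtain ⟨u, rfl⟩ := hse
  refine ⟨2 ^ (u + u), by positivity, fun t ht => ?_⟩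
  have hcard : Fintype.card (Bool × Fin u) = u + u := by simp; ring
  -- The block labels form two copies of `Fin u`, exchanged by a fixed-point-free involution.
  let p : Bool × Fin u → Bool × Fin u := fun i => (!i.1, i.2)
  have hp : ∀ i, p (p i) = i := fun i => by simp [p]
  have hp' : ∀ i, p i ≠ i := fun i h => by
    have := congrArg Prod.fst h
    simp [p] at this
  have e : Fin ((u + u) * 2 ^ (u + u) * t) ≃
      (Bool × Fin u) × (((Bool × Fin u) → Bool) × Fin t) :=
    (Fintype.equivFinOfCardEq (by
      rw [Fintype.card_prod, hcard, Fintype.card_prod, Fintype.card_fun, hcard, Fintype.card_bool,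
        Fintype.card_fin, mul_assoc])).symm
  let G : SimpleGraph (Fin ((u + u) * 2 ^ (u + u) * t)) :=
    { Adj := fun v w => Amat e p v w = 1
      symm := ⟨fun v w h => by rw [Amat_symm]; exact h⟩
      loopless := ⟨fun v h => by rw [Amat_diag] at h; exact zero_ne_one h⟩ }
  have hG : G.adjMatrix ℝ = Amat e p := by
    ext v w
    rw [SimpleGraph.adjMatrix_apply]
    rcases Amat_cases e p v w with h | h <;> simp [G, h]
  have hA : (Amat e p).IsHermitian := by
    ext v w
    simp [Amat_symm e p v w]
  refine ⟨G, ?_⟩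
  have hle : (u + u) ^ 2 ≤ (u + u) * 2 ^ (u + u) * t := by
    rw [sq, mul_assoc]
    exact Nat.mul_le_mul_left _
      ((Nat.lt_two_pow_self).le.trans (Nat.le_mul_of_pos_right _ ht))
  have hg : ∀ k, graphSing G k = singval (Amat e p) k := fun k => by
    rw [← hG]; unfold graphSing; rfl
  simp only [hg]
  rw [sum_singval _ hA _ hle ((Amat_rank e p).trans_eq (by rw [hcard])),
    sum_abs_eigenvalues _ _ hA (Bmat_posSemidef e p) (Bmat_sq e p hp hp'), Bmat_trace, hcard]
  push_cast
  ring
end
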